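/- arXiv:1211.0414 — 6 statements merged into one kernel-verified Lean document; each statement's English description precedes it below -/
import Mathlib

section
/- Let (H,d) be a Hadamard space and let f : H → (−∞,∞] and f^n : H → (−∞,∞] (n ∈ ℕ) be proper convex lower semicontinuous functions. If f^n → f in the sense of Mosco as n → ∞, then for every λ > 0 and every x ∈ H, the Moreau–Yosida envelopes converge, f^n_λ(x) → f_λ(x), and the resolvents converge strongly, J^n_λ(x) → J_λ(x) in H. -/
open Filter Topology
open scoped Classical

/-- `γ`, restricted to `[0,1]`, is an affinely parametrized geodesic. -/
def IsGeodesic {H : Type*} [MetricSpace H] (γ : ℝ → H) : Prop :=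
  ∀ s ∈ Set.Icc (0:ℝ) 1, ∀ t ∈ Set.Icc (0:ℝ) 1,
    dist (γ s) (γ t) = |s - t| * dist (γ 0) (γ 1)

/-- A Hadamard space: a complete geodesic metric space satisfying the CAT(0) inequality. -/
structure HadamardSpace (H : Type*) [MetricSpace H] [CompleteSpace H] : Prop where
  geodesic : ∀ x y : H, ∃ γ : ℝ → H, IsGeodesic γ ∧ γ 0 = x ∧ γ 1 = y
  cat0 : ∀ (x : H) (γ : ℝ → H), IsGeodesic γ → ∀ t ∈ Set.Icc (0:ℝ) 1,
      dist x (γ t) ^ 2 ≤ (1 - t) * dist x (γ 0) ^ 2 + t * dist x (γ 1) ^ 2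
        - t * (1 - t) * dist (γ 0) (γ 1) ^ 2

/-- A set is (geodesically) convex if it contains every geodesic segment between its points. -/
def GeodesicConvex {H : Type*} [MetricSpace H] (C : Set H) : Prop :=
  ∀ γ : ℝ → H, IsGeodesic γ → γ 0 ∈ C → γ 1 ∈ C → ∀ t ∈ Set.Icc (0:ℝ) 1, γ t ∈ C

/-- A function `f : H → (−∞,∞]` is convex if it is convex along every geodesic. -/
def ConvexFun {H : Type*} [MetricSpace H] (f : H → EReal) : Prop :=
  ∀ γ : ℝ → H, IsGeodesic γ → ∀ t ∈ Set.Icc (0:ℝ) 1,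
    f (γ t) ≤ ((1 - t : ℝ) : EReal) * f (γ 0) + ((t : ℝ) : EReal) * f (γ 1)

/-- `f` is strongly convex with parameter `β > 0`. -/
def StronglyConvexWith {H : Type*} [MetricSpace H] (β : ℝ) (f : H → EReal) : Prop :=
  ∀ γ : ℝ → H, IsGeodesic γ → ∀ t ∈ Set.Icc (0:ℝ) 1,
    f (γ t) ≤ ((1 - t : ℝ) : EReal) * f (γ 0) + ((t : ℝ) : EReal) * f (γ 1)
      - ((β * (t * (1 - t)) * dist (γ 0) (γ 1) ^ 2 : ℝ) : EReal)

/-- `f : H → (−∞,∞]` is proper (not identically `∞`, never `−∞`), convex and lsc. -/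
def ProperConvexLsc {H : Type*} [MetricSpace H] (f : H → EReal) : Prop :=
  (∃ x, f x ≠ ⊤) ∧ (∀ x, f x ≠ ⊥) ∧ ConvexFun f ∧ LowerSemicontinuous f

/-- `c` is an asymptotic center of the (bounded) sequence `x`:
it minimizes `y ↦ limsup_n d(y, x_n)²`. -/
def IsAsymptoticCenter {H : Type*} [MetricSpace H] (x : ℕ → H) (c : H) : Prop :=
  ∀ y : H, limsup (fun n => dist c (x n) ^ 2) atTop ≤ limsup (fun n => dist y (x n) ^ 2) atTop

/-- `x` weakly converges to `c` if `c` is the asymptotic center of every subsequence of `x`. -/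
def WeakConvSeq {H : Type*} [MetricSpace H] (x : ℕ → H) (c : H) : Prop :=
  ∀ φ : ℕ → ℕ, StrictMono φ → IsAsymptoticCenter (x ∘ φ) c

/-- Mosco convergence of `fn` to `f`. -/
def MoscoConv {H : Type*} [MetricSpace H] (fn : ℕ → H → EReal) (f : H → EReal) : Prop :=
  (∀ (x : H) (xs : ℕ → H), Bornology.IsBounded (Set.range xs) → WeakConvSeq xs x →
      f x ≤ liminf (fun n => fn n (xs n)) atTop) ∧
  (∀ x : H, ∃ ys : ℕ → H, Tendsto ys atTop (𝓝 x) ∧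
      Tendsto (fun n => fn n (ys n)) atTop (𝓝 (f x)))

/-- `p` is the resolvent `J_λ x` of `f` at `x`: it minimizes `y ↦ f(y) + d(x,y)²/(2λ)`. -/
def IsResolventPt {H : Type*} [MetricSpace H] (f : H → EReal) (lam : ℝ) (x p : H) : Prop :=
  ∀ y : H, f p + ((dist x p ^ 2 / (2 * lam) : ℝ) : EReal)
    ≤ f y + ((dist x y ^ 2 / (2 * lam) : ℝ) : EReal)

/-- The Moreau–Yosida envelope `f_λ(x) = inf_y [f(y) + d(x,y)²/(2λ)]`. -/
noncomputable def MoreauEnv {H : Type*} [MetricSpace H] (f : H → EReal) (lam : ℝ) (x : H) :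
    EReal :=
  ⨅ y : H, f y + ((dist x y ^ 2 / (2 * lam) : ℝ) : EReal)

/-- `p` is the metric projection of `x` onto `C`. -/
def IsProjPt {H : Type*} [MetricSpace H] (C : Set H) (x p : H) : Prop :=
  p ∈ C ∧ ∀ c ∈ C, dist x p ≤ dist x c

/-- The indicator function of a set, with values in `(−∞,∞]`. -/
noncomputable def indicatorE {H : Type*} (C : Set H) : H → EReal :=
  fun x => if x ∈ C then (0 : EReal) else ⊤

/-- `y = S_t x` is the gradient-flow semigroup value:
the limit of the iterated resolvents `(J_{t/n})^{(n)} x`. -/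
def IsGradientFlowPt {H : Type*} [MetricSpace H] (J : ℝ → H → H) (t : ℝ) (x y : H) : Prop :=
  Tendsto (fun n : ℕ => (J (t / (n : ℝ)))^[n] x) atTop (𝓝 y)


section AsymptoticCenters

variable {H : Type*} [MetricSpace H]

/-- The limit superior of the squared distances from `y` to the points `x n` along `F`. -/
noncomputable def limsupSqDist (F : Filter ℕ) (x : ℕ → H) (y : H) : ℝ :=
  limsup (fun n => dist y (x n) ^ 2) F

theorem exists_sq_dist_le_of_isBounded {x : ℕ → H} (hx : Bornology.IsBounded (Set.range x))
    (y : H) : ∃ C, ∀ n, dist y (x n) ^ 2 ≤ C := by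
  obtain ⟨r, hr⟩ := hx.subset_closedBall y
  refine ⟨r ^ 2, fun n => ?_⟩
  have h := hr (Set.mem_range_self n)
  rw [Metric.mem_closedBall, dist_comm] at h
  gcongr

theorem isBoundedUnder_sq_dist {x : ℕ → H} (hx : Bornology.IsBounded (Set.range x))
    (F : Filter ℕ) (y : H) : IsBoundedUnder (· ≤ ·) F (fun n => dist y (x n) ^ 2) := by
  obtain ⟨C, hC⟩ := exists_sq_dist_le_of_isBounded hx y
  exact isBoundedUnder_of ⟨C, hC⟩

theorem isCoboundedUnder_sq_dist (F : Filter ℕ) [F.NeBot] (x : ℕ → H) (y : H) :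
    IsCoboundedUnder (· ≤ ·) F (fun n => dist y (x n) ^ 2) :=
  (isBoundedUnder_of (r := (· ≥ ·)) ⟨0, fun _ => sq_nonneg _⟩).isCoboundedUnder_le

theorem limsupSqDist_le {F : Filter ℕ} [F.NeBot] {x : ℕ → H} {y : H} {b : ℝ}
    (h : ∀ᶠ n in F, dist y (x n) ^ 2 ≤ b) : limsupSqDist F x y ≤ b :=
  limsup_le_of_le (isCoboundedUnder_sq_dist F x y) h

theorem eventually_sq_dist_lt {F : Filter ℕ} {x : ℕ → H}
    (hx : Bornology.IsBounded (Set.range x)) {y : H} {b : ℝ} (h : limsupSqDist F x y < b) :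
    ∀ᶠ n in F, dist y (x n) ^ 2 < b :=
  eventually_lt_of_limsup_lt h (isBoundedUnder_sq_dist hx F y)

theorem limsupSqDist_mono {F G : Filter ℕ} [F.NeBot] (hFG : F ≤ G) {x : ℕ → H}
    (hx : Bornology.IsBounded (Set.range x)) (y : H) :
    limsupSqDist F x y ≤ limsupSqDist G x y :=
  limsup_le_limsup_of_le hFG (isCoboundedUnder_sq_dist F x y) (isBoundedUnder_sq_dist hx G y)

theorem limsupSqDist_nonneg {F : Filter ℕ} [F.NeBot] {x : ℕ → H}
    (hx : Bornology.IsBounded (Set.range x)) (y : H) : 0 ≤ limsupSqDist F x y := by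
  by_contra! h
  obtain ⟨n, hn⟩ := (eventually_sq_dist_lt hx h).exists
  exact absurd hn (not_lt.2 (sq_nonneg _))

theorem tendsto_of_limsupSqDist_nonpos {F : Filter ℕ} {x : ℕ → H}
    (hx : Bornology.IsBounded (Set.range x)) {y : H} (h : limsupSqDist F x y ≤ 0) :
    Tendsto x F (𝓝 y) := by
  rw [Metric.tendsto_nhds]
  intro ε hε
  filter_upwards [eventually_sq_dist_lt hx (h.trans_lt (pow_pos hε 2))] with n hn
  rw [dist_comm]
  exact lt_of_pow_lt_pow_left₀ 2 hε.le hn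

/-- The asymptotic radius (squared) of `x` along `F`. -/
noncomputable def asymptoticRadiusSq (x : ℕ → H) (F : Filter ℕ) : ℝ :=
  ⨅ y : H, limsupSqDist F x y

theorem asymptoticRadiusSq_le {F : Filter ℕ} [F.NeBot] {x : ℕ → H}
    (hx : Bornology.IsBounded (Set.range x)) (y : H) :
    asymptoticRadiusSq x F ≤ limsupSqDist F x y :=
  ciInf_le ⟨0, by rintro _ ⟨z, rfl⟩; exact limsupSqDist_nonneg hx z⟩ y

theorem asymptoticRadiusSq_nonneg {F : Filter ℕ} [F.NeBot] {x : ℕ → H}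
    (hx : Bornology.IsBounded (Set.range x)) : 0 ≤ asymptoticRadiusSq x F :=
  Real.iInf_nonneg fun y => limsupSqDist_nonneg hx y

theorem asymptoticRadiusSq_mono {F G : Filter ℕ} [F.NeBot] (hFG : F ≤ G) {x : ℕ → H}
    (hx : Bornology.IsBounded (Set.range x)) :
    asymptoticRadiusSq x F ≤ asymptoticRadiusSq x G := by
  have : Nonempty H := ⟨x 0⟩
  exact le_ciInf fun y => (asymptoticRadiusSq_le hx y).trans (limsupSqDist_mono hFG hx y)

variable [CompleteSpace H]

theorem HadamardSpace.limsupSqDist_geodesic_le (hH : HadamardSpace H) {F : Filter ℕ} [F.NeBot]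
    {x : ℕ → H} (hx : Bornology.IsBounded (Set.range x)) {γ : ℝ → H} (hγ : IsGeodesic γ)
    {t : ℝ} (ht : t ∈ Set.Icc (0 : ℝ) 1) :
    limsupSqDist F x (γ t) ≤ (1 - t) * limsupSqDist F x (γ 0) + t * limsupSqDist F x (γ 1)
      - t * (1 - t) * dist (γ 0) (γ 1) ^ 2 := by
  refine le_of_forall_pos_le_add fun ε hε => limsupSqDist_le ?_
  filter_upwards [eventually_sq_dist_lt hx (lt_add_of_pos_right (limsupSqDist F x (γ 0)) hε),
    eventually_sq_dist_lt hx (lt_add_of_pos_right (limsupSqDist F x (γ 1)) hε)] with n h0 h1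
  have h := hH.cat0 (x n) γ hγ t ht
  simp only [dist_comm (x n)] at h
  have := mul_le_mul_of_nonneg_left h0.le (sub_nonneg.2 ht.2)
  have := mul_le_mul_of_nonneg_left h1.le ht.1
  linarith

theorem HadamardSpace.exists_limsupSqDist_minimizer (hH : HadamardSpace H) {F : Filter ℕ}
    [F.NeBot] {x : ℕ → H} (hx : Bornology.IsBounded (Set.range x)) :
    ∃ c, limsupSqDist F x c ≤ asymptoticRadiusSq x F := by
  have : Nonempty H := ⟨x 0⟩
  set r := asymptoticRadiusSq x F with hr
  have hex : ∀ k : ℕ, ∃ y, limsupSqDist F x y < r + 1 / ((k : ℝ) + 1) := fun k =>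
    exists_lt_of_ciInf_lt (lt_add_of_pos_right _ Nat.one_div_pos_of_nat)
  choose c hc using hex
  have hdist : ∀ k l : ℕ, dist (c k) (c l) ^ 2 ≤
      2 * (1 / ((k : ℝ) + 1) + 1 / ((l : ℝ) + 1)) := by
    intro k l
    obtain ⟨γ, hγ, h0, h1⟩ := hH.geodesic (c k) (c l)
    have h := hH.limsupSqDist_geodesic_le (F := F) hx hγ (t := 1 / 2) (by norm_num)
    have hm : r ≤ limsupSqDist F x (γ (1 / 2)) := asymptoticRadiusSq_le hx _
    rw [h0, h1] at h
    have := hc k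
    have := hc l
    linarith
  have hlim := tendsto_one_div_add_atTop_nhds_zero_nat (𝕜 := ℝ)
  have hcauchy : CauchySeq c := by
    rw [Metric.cauchySeq_iff']
    intro ε hε
    have hε' : 0 < ε ^ 2 / 4 := by positivity
    obtain ⟨N, hN⟩ := eventually_atTop.1 (hlim.eventually (gt_mem_nhds hε'))
    refine ⟨N, fun n hn => lt_of_pow_lt_pow_left₀ 2 hε.le ?_⟩
    have := hdist n N
    have := hN n hn
    have := hN N le_rfl
    linarith
  obtain ⟨p, hp⟩ := cauchySeq_tendsto_of_complete hcauchy
  refine ⟨p, ?_⟩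
  obtain ⟨C, hC⟩ := exists_sq_dist_le_of_isBounded hx p
  have hC0 : 0 ≤ C := (sq_nonneg _).trans (hC 0)
  have hbound : ∀ k : ℕ, limsupSqDist F x p ≤
      (r + 1 / ((k : ℝ) + 1)) + 2 * Real.sqrt C * dist p (c k) := by
    intro k
    refine limsupSqDist_le ?_
    filter_upwards [eventually_sq_dist_lt hx (hc k)] with n hn
    have h1 : dist p (x n) ≤ Real.sqrt C := Real.le_sqrt_of_sq_le (hC n)
    have h2 := dist_triangle p (c k) (x n)
    have h3 : 0 ≤ dist p (c k) := dist_nonneg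
    have h4 : 0 ≤ dist (c k) (x n) := dist_nonneg
    have h5 := mul_le_mul_of_nonneg_right h1 h3
    rcases le_total (dist p (x n)) (dist p (c k)) with h | h <;>
      nlinarith [dist_nonneg (x := p) (y := x n), sq_nonneg (dist (c k) (x n))]
  have hd : Tendsto (fun k => dist p (c k)) atTop (𝓝 0) := by
    simpa using (tendsto_const_nhds (x := p)).dist hp
  have := (hlim.const_add r).add (hd.const_mul (2 * Real.sqrt C))
  simp only [mul_zero, add_zero] at this
  exact ge_of_tendsto' this hbound

/-- Opial-type inequality at a minimizer of `limsupSqDist`. -/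
theorem HadamardSpace.limsupSqDist_add_sq_dist_le (hH : HadamardSpace H) {F : Filter ℕ}
    [F.NeBot] {x : ℕ → H} (hx : Bornology.IsBounded (Set.range x)) {c : H}
    (hc : ∀ y, limsupSqDist F x c ≤ limsupSqDist F x y) (y : H) :
    limsupSqDist F x c + dist c y ^ 2 ≤ limsupSqDist F x y := by
  obtain ⟨γ, hγ, h0, h1⟩ := hH.geodesic c y
  have key : ∀ t ∈ Set.Ioc (0 : ℝ) 1,
      limsupSqDist F x c + (1 - t) * dist c y ^ 2 ≤ limsupSqDist F x y := by
    intro t ht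
    have h := (hc (γ t)).trans (hH.limsupSqDist_geodesic_le hx hγ (Set.Ioc_subset_Icc_self ht))
    rw [h0, h1] at h
    refine le_of_mul_le_mul_left ?_ ht.1
    linarith
  have hlim : Tendsto (fun t : ℝ => limsupSqDist F x c + (1 - t) * dist c y ^ 2) (𝓝[>] 0)
      (𝓝 (limsupSqDist F x c + (1 - 0) * dist c y ^ 2)) :=
    (Continuous.tendsto (by fun_prop) 0).mono_left nhdsWithin_le_nhds
  rw [sub_zero, one_mul] at hlim
  refine le_of_tendsto hlim ?_
  filter_upwards [Ioc_mem_nhdsGT (zero_lt_one' ℝ)] with t ht using key t ht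

end AsymptoticCenters

section CountablyGeneratedFilters

/-- A nonnegative monotone functional on countably generated proper filters becomes constant
below some filter. -/
theorem exists_filter_le_forall_le (r : Filter ℕ → ℝ)
    (hr0 : ∀ F : Filter ℕ, F.NeBot → 0 ≤ r F)
    (hmono : ∀ F G : Filter ℕ, F.NeBot → F ≤ G → r F ≤ r G)
    (F₀ : Filter ℕ) [F₀.NeBot] [F₀.IsCountablyGenerated] :
    ∃ F ≤ F₀, F.NeBot ∧ F.IsCountablyGenerated ∧
      ∀ G ≤ F, G.NeBot → G.IsCountablyGenerated → r F ≤ r G := by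
  let S := {F : Filter ℕ // F ≤ F₀ ∧ F.NeBot ∧ F.IsCountablyGenerated}
  have hstep : ∀ (k : ℕ) (F : S), ∃ G : S, G.1 ≤ F.1 ∧
      ∀ G' : S, G'.1 ≤ F.1 → r G.1 ≤ r G'.1 + 1 / ((k : ℝ) + 1) := by
    intro k F
    let T := {G : S // G.1 ≤ F.1}
    have : Nonempty T := ⟨⟨F, le_rfl⟩⟩
    have hbdd : BddBelow (Set.range fun G : T => r G.1.1) :=
      ⟨0, by rintro _ ⟨G, rfl⟩; exact hr0 _ G.1.2.2.1⟩
    obtain ⟨G, hG⟩ := exists_lt_of_ciInf_lt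
      (lt_add_of_pos_right (⨅ G : T, r G.1.1) (Nat.one_div_pos_of_nat (n := k)))
    refine ⟨G.1, G.2, fun G' hG' => hG.le.trans ?_⟩
    have := ciInf_le hbdd ⟨G', hG'⟩
    gcongr
  choose next hnext_le hnext using hstep
  let Φ : ℕ → S := fun k => Nat.rec ⟨F₀, le_rfl, ‹_›, ‹_›⟩ next k
  have hanti : Antitone fun k => (Φ k).1 := antitone_nat_of_succ_le fun k => hnext_le k (Φ k)
  have hle : ∀ k, ⨅ j, (Φ j).1 ≤ (Φ k).1 := fun k => iInf_le _ k
  have hne : (⨅ j, (Φ j).1).NeBot :=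
    iInf_neBot_of_directed hanti.directed_ge fun k => (Φ k).2.2.1
  have hcg : (⨅ j, (Φ j).1).IsCountablyGenerated := by
    have := fun j => (Φ j).2.2.2
    infer_instance
  refine ⟨⨅ j, (Φ j).1, hle 0, hne, hcg, fun G hG hGne hGcg => ?_⟩
  have hbound : ∀ k : ℕ, r (⨅ j, (Φ j).1) ≤ r G + 1 / ((k : ℝ) + 1) := fun k =>
    (hmono _ _ hne (hle (k + 1))).trans
      (hnext k (Φ k) ⟨G, hG.trans (hle 0), hGne, hGcg⟩ (hG.trans (hle k)))
  have := (tendsto_one_div_add_atTop_nhds_zero_nat (𝕜 := ℝ)).const_add (r G)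
  rw [add_zero] at this
  exact ge_of_tendsto' this hbound

/-- A countably generated proper filter finer than `atTop` is coarser than the trace of `atTop`
on some infinite set. -/
theorem exists_set_atTop_inf_principal_le (F : Filter ℕ) [F.NeBot] [F.IsCountablyGenerated]
    (hF : F ≤ atTop) : ∃ A : Set ℕ, (atTop ⊓ 𝓟 A).NeBot ∧ atTop ⊓ 𝓟 A ≤ F := by
  obtain ⟨u, hu⟩ := F.exists_seq_tendsto
  obtain ⟨φ, hφ, huφ⟩ := strictMono_subseq_of_tendsto_atTop (hu.mono_right hF)
  refine ⟨Set.range (u ∘ φ), ?_, fun s hs => ?_⟩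
  · rw [← frequently_mem_iff_neBot, frequently_atTop]
    exact fun N => ⟨u (φ N), huφ.id_le N, N, rfl⟩
  · obtain ⟨N, hN⟩ := eventually_atTop.1 ((hu.comp hφ.tendsto_atTop).eventually hs)
    rw [mem_inf_principal]
    filter_upwards [eventually_ge_atTop (u (φ N))]
    rintro n hn ⟨k, rfl⟩
    exact hN k (huφ.le_iff_le.1 hn)

end CountablyGeneratedFilters

section WeakConvergence

variable {H : Type*} [MetricSpace H]

/-- Along a suitable finer filter, a bounded sequence has one point that is an asymptotic center
along all still finer countably generated filters. -/
theorem HadamardSpace.exists_filter_asymptoticCenter [CompleteSpace H] (hH : HadamardSpace H)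
    {x : ℕ → H} (hx : Bornology.IsBounded (Set.range x)) (F₀ : Filter ℕ) [F₀.NeBot]
    [F₀.IsCountablyGenerated] :
    ∃ F ≤ F₀, F.NeBot ∧ F.IsCountablyGenerated ∧ ∃ c, ∀ G ≤ F, G.NeBot →
      G.IsCountablyGenerated → ∀ y, limsupSqDist G x c ≤ limsupSqDist G x y := by
  obtain ⟨F, hF, hne, hcg, hmin⟩ := exists_filter_le_forall_le (asymptoticRadiusSq x)
    (fun F _ => asymptoticRadiusSq_nonneg hx) (fun F G _ h => asymptoticRadiusSq_mono h hx) F₀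
  obtain ⟨c, hc⟩ := hH.exists_limsupSqDist_minimizer (F := F) hx
  refine ⟨F, hF, hne, hcg, c, fun G hG hGne hGcg y => ?_⟩
  calc limsupSqDist G x c ≤ limsupSqDist F x c := limsupSqDist_mono hG hx c
    _ ≤ asymptoticRadiusSq x F := hc
    _ ≤ asymptoticRadiusSq x G := hmin G hG hGne hGcg
    _ ≤ limsupSqDist G x y := asymptoticRadiusSq_le hx y

theorem isBounded_range_ite {x : ℕ → H} (hx : Bornology.IsBounded (Set.range x)) (A : Set ℕ)
    (c : H) : Bornology.IsBounded (Set.range fun n => if n ∈ A then x n else c) := by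
  refine (hx.insert c).subset ?_
  rintro _ ⟨n, rfl⟩
  by_cases hn : n ∈ A <;> simp [hn]

theorem weakConvSeq_ite {x : ℕ → H} (hx : Bornology.IsBounded (Set.range x)) {A : Set ℕ} {c : H}
    (h : ∀ G ≤ atTop ⊓ 𝓟 A, G.NeBot → G.IsCountablyGenerated →
      ∀ y, limsupSqDist G x c ≤ limsupSqDist G x y) :
    WeakConvSeq (fun n => if n ∈ A then x n else c) c := by
  intro φ hφ y
  set z : ℕ → H := fun n => if n ∈ A then x n else c
  have hz : Bornology.IsBounded (Set.range z) := isBounded_range_ite hx A c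
  change limsupSqDist (map φ atTop) z c ≤ limsupSqDist (map φ atTop) z y
  rcases (map φ atTop ⊓ 𝓟 A).eq_or_neBot with hbot | hne
  · refine (limsupSqDist_le ?_).trans (limsupSqDist_nonneg hz y)
    have hA : ∀ᶠ n in map φ atTop, n ∉ A := by
      rw [← not_frequently, frequently_mem_iff_neBot, hbot]
      exact not_neBot.2 rfl
    filter_upwards [hA] with n hn
    simp [z, hn]
  · have hG := h (map φ atTop ⊓ 𝓟 A) (inf_le_inf_right _ hφ.tendsto_atTop) hne inferInstance
    have hxz : ∀ᶠ n in map φ atTop ⊓ 𝓟 A, x n = z n := by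
      filter_upwards [mem_inf_of_right (mem_principal_self A)] with n hn
      simp [z, hn]
    have hy : limsupSqDist (map φ atTop ⊓ 𝓟 A) x y = limsupSqDist (map φ atTop ⊓ 𝓟 A) z y :=
      limsup_congr (hxz.mono fun n hn => by rw [hn])
    refine le_trans ?_ ((hG y).trans (hy.le.trans (limsupSqDist_mono inf_le_left hz y)))
    refine le_of_forall_pos_le_add fun ε hε => limsupSqDist_le ?_
    have hlt := eventually_sq_dist_lt hx
      (lt_add_of_pos_right (limsupSqDist (map φ atTop ⊓ 𝓟 A) x c) hε)
    have h0 := limsupSqDist_nonneg (F := map φ atTop ⊓ 𝓟 A) hx c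
    filter_upwards [eventually_inf_principal.1 hlt] with n hn
    by_cases hnA : n ∈ A
    · simpa [z, hnA] using (hn hnA).le
    · simpa [z, hnA] using add_nonneg h0 hε.le

theorem weakConvSeq_of_tendsto {x : ℕ → H} {c : H} (h : Tendsto x atTop (𝓝 c)) :
    WeakConvSeq x c := by
  intro φ hφ y
  have hlim : Tendsto (fun n => dist c ((x ∘ φ) n) ^ 2) atTop (𝓝 0) := by
    simpa using ((tendsto_const_nhds (x := c)).dist (h.comp hφ.tendsto_atTop)).pow 2
  rw [hlim.limsup_eq]
  exact limsupSqDist_nonneg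
    (Metric.isBounded_range_of_tendsto _ (h.comp hφ.tendsto_atTop)) y

theorem MoscoConv.eventually_lt_of_tendsto {fn : ℕ → H → EReal} {f : H → EReal}
    (hM : MoscoConv fn f) {x : ℕ → H} {c : H} (hx : Tendsto x atTop (𝓝 c)) {b : EReal}
    (hb : b < f c) : ∀ᶠ n in atTop, b < fn n (x n) :=
  eventually_lt_of_lt_liminf (hb.trans_le
    (hM.1 c x (Metric.isBounded_range_of_tendsto _ hx) (weakConvSeq_of_tendsto hx)))

end WeakConvergence

section Resolvents

variable {H : Type*} [MetricSpace H]

theorem IsResolventPt.ne_top {f : H → EReal} {lam : ℝ} {x p : H} (hp : IsResolventPt f lam x p)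
    (hf : ∃ y, f y ≠ ⊤) : f p ≠ ⊤ := by
  obtain ⟨y, hy⟩ := hf
  intro h
  have := hp y
  rw [h, EReal.top_add_coe, top_le_iff] at this
  exact EReal.add_ne_top hy (EReal.coe_ne_top _) this

theorem IsResolventPt.toReal_le {f : H → EReal} {lam : ℝ} {x p : H}
    (hp : IsResolventPt f lam x p) (hf : ∀ y, f y ≠ ⊥) {y : H} (hy : f y ≠ ⊤) :
    (f p).toReal + dist x p ^ 2 / (2 * lam) ≤ (f y).toReal + dist x y ^ 2 / (2 * lam) := by
  have h := hp y
  rw [← EReal.coe_toReal (hp.ne_top ⟨y, hy⟩) (hf p), ← EReal.coe_toReal hy (hf y)] at h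
  exact_mod_cast h

theorem IsResolventPt.moreauEnv_eq {f : H → EReal} {lam : ℝ} {x p : H}
    (hp : IsResolventPt f lam x p) :
    MoreauEnv f lam x = f p + ((dist x p ^ 2 / (2 * lam) : ℝ) : EReal) :=
  le_antisymm (iInf_le _ p) (le_iInf hp)

theorem ConvexFun.toReal_le {f : H → EReal} (hconv : ConvexFun f) (hf : ∀ y, f y ≠ ⊥)
    {γ : ℝ → H} (hγ : IsGeodesic γ) (h0 : f (γ 0) ≠ ⊤) (h1 : f (γ 1) ≠ ⊤) {t : ℝ}
    (ht : t ∈ Set.Icc (0 : ℝ) 1) :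
    f (γ t) ≤ (((1 - t) * (f (γ 0)).toReal + t * (f (γ 1)).toReal : ℝ) : EReal) := by
  have h := hconv γ hγ t ht
  rw [← EReal.coe_toReal h0 (hf _), ← EReal.coe_toReal h1 (hf _)] at h
  exact_mod_cast h

variable [CompleteSpace H]

theorem IsResolventPt.eq_of_le (hH : HadamardSpace H) {f : H → EReal} (hf : ProperConvexLsc f)
    {lam : ℝ} (hlam : 0 < lam) {x p q : H} (hp : IsResolventPt f lam x p) (hq : f q ≠ ⊤)
    (hqp : (f q).toReal + dist x q ^ 2 / (2 * lam) ≤ (f p).toReal + dist x p ^ 2 / (2 * lam)) :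
    q = p := by
  obtain ⟨hdom, hbot, hconv, -⟩ := hf
  obtain ⟨γ, hγ, rfl, rfl⟩ := hH.geodesic p q
  have ht : (1 / 2 : ℝ) ∈ Set.Icc (0 : ℝ) 1 := by norm_num
  have h := hconv.toReal_le hbot hγ (hp.ne_top hdom) hq ht
  have htop : f (γ (1 / 2)) ≠ ⊤ := ne_top_of_le_ne_top (EReal.coe_ne_top _) h
  have hm := hp.toReal_le hbot htop
  rw [← EReal.coe_toReal htop (hbot _), EReal.coe_le_coe_iff] at h
  have hcat := hH.cat0 x γ hγ _ ht
  have hcat' := div_le_div_of_nonneg_right hcat (by positivity : 0 ≤ 2 * lam)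
  have hsplit : ((1 - 1 / 2) * dist x (γ 0) ^ 2 + 1 / 2 * dist x (γ 1) ^ 2
        - 1 / 2 * (1 - 1 / 2) * dist (γ 0) (γ 1) ^ 2) / (2 * lam)
      = 1 / 2 * (dist x (γ 0) ^ 2 / (2 * lam)) + 1 / 2 * (dist x (γ 1) ^ 2 / (2 * lam))
        - 1 / 4 * (dist (γ 0) (γ 1) ^ 2 / (2 * lam)) := by ring
  rw [hsplit] at hcat'
  have hle : dist (γ 0) (γ 1) ^ 2 / (2 * lam) ≤ 0 := by linarith
  have hsq : dist (γ 0) (γ 1) ^ 2 ≤ 0 := by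
    rwa [div_le_iff₀ (by positivity), zero_mul] at hle
  have hd : dist (γ 0) (γ 1) = 0 := by
    simpa using le_antisymm hsq (sq_nonneg _)
  exact (dist_eq_zero.1 hd).symm

/-- Resolvents of a Mosco convergent sequence at a fixed point are bounded. -/
theorem MoscoConv.isBounded_range_resolvent (hH : HadamardSpace H) {fn : ℕ → H → EReal}
    {f : H → EReal} (hM : MoscoConv fn f) (hfn : ∀ n, ProperConvexLsc (fn n)) {lam : ℝ}
    (hlam : 0 < lam) {x c : H} (hc : f c ≠ ⊤) (hc' : f c ≠ ⊥) {p y : ℕ → H}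
    (hp : ∀ n, IsResolventPt (fn n) lam x (p n)) (hy : Tendsto y atTop (𝓝 c))
    (hfy : Tendsto (fun n => fn n (y n)) atTop (𝓝 (f c))) :
    Bornology.IsBounded (Set.range p) := by
  set D : ℕ → ℝ := fun n => dist (y n) (p n)
  have hyb := Metric.isBounded_range_of_tendsto y hy
  suffices hD : IsBoundedUnder (· ≤ ·) atTop D by
    obtain ⟨R, hR⟩ := hD.bddAbove_range
    obtain ⟨r, hr⟩ := hyb.subset_closedBall c
    refine (Metric.isBounded_iff_subset_closedBall c).2 ⟨R + r, ?_⟩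
    rintro _ ⟨n, rfl⟩
    have h1 : D n ≤ R := hR ⟨n, rfl⟩
    have h2 : dist (y n) c ≤ r := hr ⟨n, rfl⟩
    have h3 := dist_triangle_left (p n) c (y n)
    exact h3.trans (add_le_add h1 h2)
  by_contra hD
  have hne : (atTop ⊓ comap D atTop).NeBot := by
    rw [← map_neBot_iff D, Filter.push_pull, inf_comm, inf_neBot_iff_frequently_left]
    intro P hP
    obtain ⟨R, hR⟩ := eventually_atTop.1 hP
    rw [frequently_map]
    by_contra hnot
    refine hD ⟨R, eventually_map.2 ((not_frequently.1 hnot).mono fun n hn => ?_)⟩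
    exact (not_le.1 fun h => hn (hR _ h)).le
  obtain ⟨A, hA, hAle⟩ := exists_set_atTop_inf_principal_le (atTop ⊓ comap D atTop) inf_le_left
  have hDA : Tendsto D (atTop ⊓ 𝓟 A) atTop := tendsto_comap.mono_left (hAle.trans inf_le_right)
  have hz : ∀ n, ∃ z, (¬(n ∈ A ∧ 1 ≤ D n) → z = y n) ∧ (n ∈ A → 1 ≤ D n → fn n (y n) ≠ ⊤ →
      dist (y n) z = 1 / √(D n) ∧
      fn n z ≤ (((1 - 1 / √(D n) ^ 3) * (fn n (y n)).toReal +
        1 / √(D n) ^ 3 * (fn n (p n)).toReal : ℝ) : EReal)) := by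
    intro n
    by_cases hn : n ∈ A ∧ 1 ≤ D n
    swap
    · exact ⟨y n, fun _ => rfl, fun h1 h2 => absurd ⟨h1, h2⟩ hn⟩
    obtain ⟨γ, hγ, h0, h1⟩ := hH.geodesic (y n) (p n)
    have hs : 1 ≤ √(D n) := Real.one_le_sqrt.2 hn.2
    have hs2 : √(D n) ^ 2 = D n := Real.sq_sqrt dist_nonneg
    have ht : 1 / √(D n) ^ 3 ∈ Set.Icc (0 : ℝ) 1 :=
      ⟨by positivity, div_le_one_of_le₀ (one_le_pow₀ hs) (by positivity)⟩
    refine ⟨γ (1 / √(D n) ^ 3), fun h => absurd hn h, fun _ _ htop => ⟨?_, ?_⟩⟩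
    · have h := hγ 0 (by norm_num) _ ht
      rw [h0, h1, zero_sub, abs_neg, abs_of_nonneg ht.1] at h
      rw [h]
      change 1 / √(D n) ^ 3 * D n = _
      nth_rewrite 2 [← hs2]
      field_simp
    · have h := (hfn n).2.2.1.toReal_le (hfn n).2.1 hγ (by rwa [h0])
        (by rw [h1]; exact (hp n).ne_top (hfn n).1) ht
      rwa [h0, h1] at h
  choose z hz0 hz1 using hz
  have htop : ∀ᶠ n in atTop, fn n (y n) ≠ ⊤ :=
    hfy.eventually_ne hc
  have hfc : Tendsto (fun n => (fn n (y n)).toReal) atTop (𝓝 (f c).toReal) :=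
    (EReal.tendsto_toReal hc hc').comp hfy
  have hsqrt : Tendsto (fun n => √(D n)) (atTop ⊓ 𝓟 A) atTop :=
    Real.tendsto_sqrt_atTop.comp hDA
  have hyz : Tendsto (fun n => dist (y n) (z n)) atTop (𝓝 0) := by
    rw [Metric.tendsto_nhds]
    intro ε hε
    have h1 : ∀ᶠ n in atTop ⊓ 𝓟 A, 1 / √(D n) < ε := by
      have := hsqrt.inv_tendsto_atTop.eventually (gt_mem_nhds hε)
      simpa using this
    filter_upwards [eventually_inf_principal.1 h1, htop] with n hn hnt
    rw [Real.dist_0_eq_abs, abs_of_nonneg dist_nonneg]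
    by_cases h : n ∈ A ∧ 1 ≤ D n
    · rw [(hz1 n h.1 h.2 hnt).1]
      exact hn h.1
    · rwa [hz0 n h, dist_self]
  have hzc : Tendsto z atTop (𝓝 c) := (tendsto_iff_of_dist hyz).1 hy
  set v := (f c).toReal
  have hlow := hM.eventually_lt_of_tendsto hzc (b := ((v - 1 : ℝ) : EReal)) (by
    rw [← EReal.coe_toReal hc hc', EReal.coe_lt_coe_iff]
    exact sub_one_lt v)
  set M := dist x c + 1
  have hM' : ∀ᶠ n in atTop, dist x (y n) < M :=
    ((tendsto_const_nhds (x := x)).dist hy).eventually (gt_mem_nhds (lt_add_one _))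
  have hv : ∀ᶠ n in atTop, (fn n (y n)).toReal < v + 1 :=
    hfc.eventually (gt_mem_nhds (lt_add_one _))
  have hfalse : ∀ᶠ n in atTop ⊓ 𝓟 A, False := by
    filter_upwards [hlow.filter_mono inf_le_left, htop.filter_mono inf_le_left,
      hM'.filter_mono inf_le_left, hv.filter_mono inf_le_left,
      mem_inf_of_right (mem_principal_self A), hDA.eventually_ge_atTop 1,
      hDA.eventually_ge_atTop (2 * M),
      hsqrt.eventually_ge_atTop (8 * lam * (2 + M ^ 2 / (2 * lam)))] with n h1 h2 h3 h4 h5 h6 h7 h8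
    have hlt := h1.trans_le (hz1 n h5 h6 h2).2
    rw [EReal.coe_lt_coe_iff] at hlt
    have hres := (hp n).toReal_le (hfn n).2.1 h2
    have htri : D n ≤ dist x (y n) + dist x (p n) := dist_triangle_left (y n) (p n) x
    set a := (fn n (p n)).toReal
    set b := (fn n (y n)).toReal
    set s := √(D n)
    have hs : 1 ≤ s := Real.one_le_sqrt.2 h6
    have hs2 : s ^ 2 = D n := Real.sq_sqrt dist_nonneg
    have hxy : dist x (y n) ^ 2 / (2 * lam) ≤ M ^ 2 / (2 * lam) := by gcongr
    have hxp : (D n / 2) ^ 2 / (2 * lam) ≤ dist x (p n) ^ 2 / (2 * lam) := by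
      have : D n / 2 ≤ dist x (p n) := by linarith
      gcongr
    have hab : a - b ≤ M ^ 2 / (2 * lam) - s ^ 4 / (8 * lam) := by
      have : (D n / 2) ^ 2 / (2 * lam) = s ^ 4 / (8 * lam) := by
        rw [← hs2]; field_simp; ring
      linarith
    have hmul : 1 / s ^ 3 * (a - b) ≤ M ^ 2 / (2 * lam) - s / (8 * lam) := by
      have ht1 : 1 / s ^ 3 ≤ 1 := div_le_one_of_le₀ (one_le_pow₀ hs) (by positivity)
      have hnn : 0 ≤ M ^ 2 / (2 * lam) := by positivity
      calc 1 / s ^ 3 * (a - b) ≤ 1 / s ^ 3 * (M ^ 2 / (2 * lam) - s ^ 4 / (8 * lam)) := by gcongr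
        _ = 1 / s ^ 3 * (M ^ 2 / (2 * lam)) - s / (8 * lam) := by field_simp
        _ ≤ M ^ 2 / (2 * lam) - s / (8 * lam) := by
          have := mul_le_of_le_one_left hnn ht1
          linarith
    have hs8 : 2 + M ^ 2 / (2 * lam) ≤ s / (8 * lam) := by
      rw [le_div_iff₀ (by positivity)]
      linarith
    linarith
  exact hA.ne (eventually_false_iff_eq_bot.1 hfalse)

theorem MoscoConv.tendsto_resolvent (hH : HadamardSpace H) {fn : ℕ → H → EReal}
    {f : H → EReal} (hM : MoscoConv fn f) (hf : ProperConvexLsc f)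
    (hfn : ∀ n, ProperConvexLsc (fn n)) {lam : ℝ}
    (hlam : 0 < lam) {x c : H} {p : ℕ → H} (hc : IsResolventPt f lam x c)
    (hp : ∀ n, IsResolventPt (fn n) lam x (p n)) :
    Tendsto p atTop (𝓝 c) := by
  obtain ⟨y, hy, hfy⟩ := hM.2 c
  have hctop := hc.ne_top hf.1
  have hcbot := hf.2.1 c
  have hb := hM.isBounded_range_resolvent hH hfn hlam hctop hcbot hp hy hfy
  rw [Metric.tendsto_nhds]
  intro ε hε
  by_contra hnot
  have hfreq : ∃ᶠ n in atTop, p n ∉ Metric.ball c ε := not_eventually.1 hnot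
  have hne₀ : (atTop ⊓ 𝓟 {n | p n ∉ Metric.ball c ε}).NeBot :=
    frequently_mem_iff_neBot.1 hfreq
  obtain ⟨F, hF, hFne, hFcg, q, hq⟩ := hH.exists_filter_asymptoticCenter hb
    (atTop ⊓ 𝓟 {n | p n ∉ Metric.ball c ε})
  obtain ⟨C, hC⟩ := exists_sq_dist_le_of_isBounded hb x
  obtain ⟨L, -, hL⟩ := (isCompact_Icc (a := (0 : ℝ)) (b := C)).exists_mapClusterPt
    (f := F) (u := fun n => dist x (p n) ^ 2)
    (le_principal_iff.2 (mem_map.2 (Eventually.of_forall fun n => ⟨sq_nonneg _, hC n⟩)))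
  have hF' : (F ⊓ comap (fun n => dist x (p n) ^ 2) (𝓝 L)).NeBot := by
    rw [← map_neBot_iff fun n => dist x (p n) ^ 2, Filter.push_pull, inf_comm]
    exact hL
  obtain ⟨A, hA, hAle⟩ := exists_set_atTop_inf_principal_le
    (F ⊓ comap (fun n => dist x (p n) ^ 2) (𝓝 L)) (inf_le_left.trans (hF.trans inf_le_left))
  have hAF : atTop ⊓ 𝓟 A ≤ F := hAle.trans inf_le_left
  have hxL : Tendsto (fun n => dist x (p n) ^ 2) (atTop ⊓ 𝓟 A) (𝓝 L) :=
    tendsto_comap.mono_left (hAle.trans inf_le_right)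
  have hopial : limsupSqDist (atTop ⊓ 𝓟 A) p q + dist q x ^ 2 ≤ L := by
    have h := hH.limsupSqDist_add_sq_dist_le hb (hq _ hAF hA inferInstance) x
    rwa [show limsupSqDist (atTop ⊓ 𝓟 A) p x = L from hxL.limsup_eq] at h
  have hweak : f q ≤ liminf (fun n => fn n (if n ∈ A then p n else q)) atTop :=
    hM.1 q _ (isBounded_range_ite hb A q)
      (weakConvSeq_ite hb fun G hG => hq G (hG.trans hAF))
  have htop : ∀ᶠ n in atTop, fn n (y n) ≠ ⊤ := hfy.eventually_ne hctop
  have hfc : Tendsto (fun n => (fn n (y n)).toReal) atTop (𝓝 (f c).toReal) :=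
    (EReal.tendsto_toReal hctop hcbot).comp hfy
  set K := (f c).toReal + dist x c ^ 2 / (2 * lam) - L / (2 * lam)
  have hK : Tendsto (fun n => (fn n (y n)).toReal + dist x (y n) ^ 2 / (2 * lam)
      - dist x (p n) ^ 2 / (2 * lam)) (atTop ⊓ 𝓟 A) (𝓝 K) :=
    ((hfc.add ((((tendsto_const_nhds (x := x)).dist hy).pow 2).div_const _)).mono_left
      inf_le_left).sub (hxL.div_const _)
  have hqK : f q ≤ (K : EReal) := by
    refine EReal.ge_of_forall_gt_iff_ge.1 fun b hbq => EReal.coe_le_coe_iff.2 ?_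
    have hlow := (eventually_lt_of_lt_liminf (hbq.trans_le hweak)).filter_mono
      (inf_le_left (b := 𝓟 A))
    refine ge_of_tendsto hK ?_
    filter_upwards [hlow, htop.filter_mono inf_le_left,
      mem_inf_of_right (mem_principal_self A)] with n h1 h2 h3
    have hres := (hp n).toReal_le (hfn n).2.1 h2
    rw [if_pos h3, ← EReal.coe_toReal ((hp n).ne_top (hfn n).1) ((hfn n).2.1 _),
      EReal.coe_lt_coe_iff] at h1
    linarith
  have hqtop : f q ≠ ⊤ := ne_top_of_le_ne_top (EReal.coe_ne_top _) hqK
  have hqK' : (f q).toReal ≤ K := by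
    rwa [← EReal.coe_toReal hqtop (hf.2.1 q), EReal.coe_le_coe_iff] at hqK
  have hcq := hc.toReal_le hf.2.1 hqtop
  have hnn := limsupSqDist_nonneg (F := atTop ⊓ 𝓟 A) hb q
  have hLq : limsupSqDist (atTop ⊓ 𝓟 A) p q / (2 * lam) + dist x q ^ 2 / (2 * lam)
      ≤ L / (2 * lam) := by
    rw [← add_div, dist_comm x q]
    gcongr
  have hqc : q = c := by
    refine hc.eq_of_le hH hf hlam hqtop ?_
    have : 0 ≤ limsupSqDist (atTop ⊓ 𝓟 A) p q / (2 * lam) := by positivity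
    linarith
  have hle0 : limsupSqDist (atTop ⊓ 𝓟 A) p q ≤ 0 := by
    have : limsupSqDist (atTop ⊓ 𝓟 A) p q / (2 * lam) ≤ 0 := by linarith
    rwa [div_le_iff₀ (by positivity), zero_mul] at this
  have hconv : Tendsto p (atTop ⊓ 𝓟 A) (𝓝 c) := hqc ▸ tendsto_of_limsupSqDist_nonpos hb hle0
  have hin := hconv.eventually (Metric.ball_mem_nhds c hε)
  have hout : ∀ᶠ n in atTop ⊓ 𝓟 A, p n ∉ Metric.ball c ε :=
    (hAF.trans hF) (mem_inf_of_right (mem_principal_self _))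
  obtain ⟨n, h1, h2⟩ := (hin.and hout).exists
  exact h2 h1

theorem MoscoConv.tendsto_toReal_resolvent (hH : HadamardSpace H) {fn : ℕ → H → EReal}
    {f : H → EReal} (hM : MoscoConv fn f) (hf : ProperConvexLsc f)
    (hfn : ∀ n, ProperConvexLsc (fn n)) {lam : ℝ}
    (hlam : 0 < lam) {x c : H} {p : ℕ → H} (hc : IsResolventPt f lam x c)
    (hp : ∀ n, IsResolventPt (fn n) lam x (p n)) :
    Tendsto (fun n => (fn n (p n)).toReal) atTop (𝓝 (f c).toReal) := by
  have hpc := hM.tendsto_resolvent hH hf hfn hlam hc hp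
  obtain ⟨y, hy, hfy⟩ := hM.2 c
  have hctop := hc.ne_top hf.1
  have hcbot := hf.2.1 c
  have hsq : ∀ {u : ℕ → H}, Tendsto u atTop (𝓝 c) →
      Tendsto (fun n => dist x (u n) ^ 2 / (2 * lam)) atTop (𝓝 (dist x c ^ 2 / (2 * lam))) :=
    fun hu => (((tendsto_const_nhds (x := x)).dist hu).pow 2).div_const _
  have hup := ((((EReal.tendsto_toReal hctop hcbot).comp hfy).add (hsq hy)).sub (hsq hpc))
  rw [add_sub_cancel_right] at hup
  refine tendsto_order.2 ⟨fun b hb => ?_, fun b hb => ?_⟩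
  · have hb' : (b : EReal) < f c := by
      rwa [← EReal.coe_toReal hctop hcbot, EReal.coe_lt_coe_iff]
    filter_upwards [hM.eventually_lt_of_tendsto hpc hb'] with n hn
    rwa [← EReal.coe_toReal ((hp n).ne_top (hfn n).1) ((hfn n).2.1 _),
      EReal.coe_lt_coe_iff] at hn
  · filter_upwards [hup.eventually (gt_mem_nhds hb), hfy.eventually_ne hctop] with n h1 h2
    have hres := (hp n).toReal_le (hfn n).2.1 h2
    simp only [Function.comp_apply] at h1
    linarith

end Resolvents

/-- Mosco convergence of proper convex lsc functions on a Hadamard space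
implies convergence of the Moreau–Yosida envelopes and strong convergence of the resolvents. -/
theorem mosco_implies_resolvent_convergence
    {H : Type*} [MetricSpace H] [CompleteSpace H] (hH : HadamardSpace H)
    (f : H → EReal) (fn : ℕ → H → EReal)
    (hf : ProperConvexLsc f) (hfn : ∀ n, ProperConvexLsc (fn n))
    (J : ℝ → H → H) (Jn : ℕ → ℝ → H → H)
    (hJ : ∀ lam > (0:ℝ), ∀ x : H, IsResolventPt f lam x (J lam x))
    (hJn : ∀ n, ∀ lam > (0:ℝ), ∀ x : H, IsResolventPt (fn n) lam x (Jn n lam x))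
    (hM : MoscoConv fn f) :
    ∀ lam > (0:ℝ), ∀ x : H,
      Tendsto (fun n => MoreauEnv (fn n) lam x) atTop (𝓝 (MoreauEnv f lam x)) ∧
      Tendsto (fun n => Jn n lam x) atTop (𝓝 (J lam x)) := by
  intro lam hlam x
  have hp := fun n => hJn n lam hlam x
  have hc := hJ lam hlam x
  have hconv := hM.tendsto_resolvent hH hf hfn hlam hc hp
  refine ⟨?_, hconv⟩
  have hval := hM.tendsto_toReal_resolvent hH hf hfn hlam hc hp
  have hsum := hval.add ((((tendsto_const_nhds (x := x)).dist hconv).pow 2).div_const (2 * lam))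
  have henv : ∀ {g : H → EReal} {q : H}, ProperConvexLsc g → IsResolventPt g lam x q →
      MoreauEnv g lam x = (((g q).toReal + dist x q ^ 2 / (2 * lam) : ℝ) : EReal) := by
    intro g q hg hq
    rw [hq.moreauEnv_eq, EReal.coe_add, EReal.coe_toReal (hq.ne_top hg.1) (hg.2.1 q)]
  rw [henv hf hc]
  simp only [fun n => henv (hfn n) (hp n)]
  exact EReal.tendsto_coe.2 hsum
end

section
/- Let (H,d) be a Hadamard space and let f : H → (−∞,∞] and f^n : H → (−∞,∞] (n ∈ ℕ) be proper convex lower semicontinuous functions, with resolvents J_λ, J^n_λ and gradient flow semigroups (S_t)_{t>0}, (S^n_t)_{t>0}. If for every x in the closure of dom f and every λ > 0 one has J^n_λ x → J_λ x as n → ∞, then S^n_t x → S_t x as n → ∞, for every x in the closure of dom f and every t > 0. -/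
open Filter Topology
open scoped Classical

/-- In a Hadamard space the squared diagonals of a quadrilateral are dominated by its squared
sides. -/
theorem HadamardSpace.quadrilateral {H : Type*} [MetricSpace H] [CompleteSpace H]
    (hH : HadamardSpace H) (x y p q : H) :
    dist x q ^ 2 + dist y p ^ 2 ≤ dist x p ^ 2 + dist y q ^ 2 + dist x y ^ 2 + dist p q ^ 2 := by
  obtain ⟨γ, hγ, rfl, rfl⟩ := hH.geodesic x q
  have hmem : (1 / 2 : ℝ) ∈ Set.Icc (0 : ℝ) 1 := by constructor <;> norm_num
  have hy := hH.cat0 y γ hγ _ hmem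
  have hp := hH.cat0 p γ hγ _ hmem
  have htri := dist_triangle_right y p (γ (1 / 2))
  have hsq : dist y p ^ 2 ≤ 2 * (dist y (γ (1 / 2)) ^ 2 + dist p (γ (1 / 2)) ^ 2) := by
    nlinarith [sq_nonneg (dist y (γ (1 / 2)) - dist p (γ (1 / 2))),
      pow_le_pow_left₀ dist_nonneg htri 2]
  rw [dist_comm y (γ 0)] at hy
  rw [dist_comm p (γ 0)] at hp
  linarith

/-- The resolvents `J` satisfy the discrete evolution variational inequality for the real-valued
function `g` with domain `D`. -/
structure EVIResolvent {H : Type*} [MetricSpace H] (D : Set H) (g : H → ℝ) (J : ℝ → H → H) :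
    Prop where
  mem : ∀ lam > (0 : ℝ), ∀ x, J lam x ∈ D
  evi : ∀ lam > (0 : ℝ), ∀ x, ∀ z ∈ D,
    2 * lam * (g (J lam x) - g z) ≤ dist x z ^ 2 - dist x (J lam x) ^ 2 - dist (J lam x) z ^ 2

theorem ProperConvexLsc.eviResolvent {H : Type*} [MetricSpace H] [CompleteSpace H]
    (hH : HadamardSpace H) {f : H → EReal} (hf : ProperConvexLsc f) {J : ℝ → H → H}
    (hJ : ∀ lam > (0 : ℝ), ∀ x : H, IsResolventPt f lam x (J lam x)) :
    EVIResolvent {y : H | f y ≠ ⊤} (fun x => (f x).toReal) J := by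
  obtain ⟨⟨x₀, hx₀⟩, hbot, hconv, -⟩ := hf
  have hmem : ∀ lam > (0 : ℝ), ∀ x, f (J lam x) ≠ ⊤ := by
    intro lam hlam x htop
    have h := hJ lam hlam x x₀
    rw [htop, EReal.top_add_coe, top_le_iff] at h
    lift f x₀ to ℝ using ⟨hx₀, hbot x₀⟩ with a
    exact EReal.coe_ne_top _ (by exact_mod_cast h)
  refine ⟨hmem, fun lam hlam x z hz => ?_⟩
  obtain ⟨γ, hγ, h0, h1⟩ := hH.geodesic (J lam x) z
  have key : ∀ t ∈ Set.Ioc (0 : ℝ) 1,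
      2 * lam * ((f (J lam x)).toReal - (f z).toReal) ≤
        dist x z ^ 2 - dist x (J lam x) ^ 2 - (1 - t) * dist (J lam x) z ^ 2 := by
    intro t ht
    have hcat := hH.cat0 x γ hγ t ⟨ht.1.le, ht.2⟩
    have hmin := hJ lam hlam x (γ t)
    have hcv := hconv γ hγ t ⟨ht.1.le, ht.2⟩
    rw [h0, h1] at hcat hcv
    have hp := hmem lam hlam x
    have hpb := hbot (J lam x)
    have hzb := hbot z
    have hz' : f z ≠ ⊤ := hz
    generalize f (J lam x) = a at *
    generalize f z = b at *
    lift a to ℝ using ⟨hp, hpb⟩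
    lift b to ℝ using ⟨hz', hzb⟩
    have hfin : f (γ t) ≠ ⊤ := by
      intro htop
      rw [htop, top_le_iff] at hcv
      exact EReal.coe_ne_top _ (by exact_mod_cast hcv)
    have hfb := hbot (γ t)
    generalize f (γ t) = c at *
    lift c to ℝ using ⟨hfin, hfb⟩
    norm_cast at hmin hcv
    simp only [EReal.toReal_coe]
    have hmul := mul_le_mul_of_nonneg_left hmin (by positivity : 0 ≤ 2 * lam)
    have e : ∀ u v : ℝ, 2 * lam * (u + v / (2 * lam)) = 2 * lam * u + v := by
      intro u v; field_simp
    rw [e, e] at hmul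
    have hcv2 := mul_le_mul_of_nonneg_left hcv (by positivity : 0 ≤ 2 * lam)
    refine le_of_mul_le_mul_left ?_ ht.1
    linarith
  have hlim : Tendsto (fun t : ℝ => dist x z ^ 2 - dist x (J lam x) ^ 2
      - (1 - t) * dist (J lam x) z ^ 2) (𝓝[>] 0)
      (𝓝 (dist x z ^ 2 - dist x (J lam x) ^ 2 - (1 - 0) * dist (J lam x) z ^ 2)) := by
    apply tendsto_nhdsWithin_of_tendsto_nhds
    exact Continuous.tendsto (by fun_prop) 0
  rw [sub_zero, one_mul] at hlim
  refine ge_of_tendsto hlim ?_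
  filter_upwards [Ioc_mem_nhdsGT (zero_lt_one' ℝ)] with t ht using key t ht

namespace EVIResolvent

variable {H : Type*} [MetricSpace H] {D : Set H} {g : H → ℝ} {J : ℝ → H → H}

theorem dist_le [CompleteSpace H] (h : EVIResolvent D g J) (hH : HadamardSpace H) {lam : ℝ}
    (hlam : 0 < lam) (x y : H) : dist (J lam x) (J lam y) ≤ dist x y := by
  have hx := h.evi lam hlam x _ (h.mem lam hlam y)
  have hy := h.evi lam hlam y _ (h.mem lam hlam x)
  have hq := hH.quadrilateral x y (J lam x) (J lam y)
  rw [dist_comm (J lam y) (J lam x)] at hy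
  exact le_of_sq_le_sq (by linarith) dist_nonneg

theorem dist_iterate_le [CompleteSpace H] (h : EVIResolvent D g J) (hH : HadamardSpace H)
    {lam : ℝ} (hlam : 0 < lam) (m : ℕ) (x y : H) :
    dist ((J lam)^[m] x) ((J lam)^[m] y) ≤ dist x y := by
  induction m with
  | zero => simp
  | succ m ih =>
    rw [Function.iterate_succ_apply', Function.iterate_succ_apply']
    exact (h.dist_le hH hlam _ _).trans ih

/-- A resolvent value has slope at most `dist x (J lam x) / lam`. -/
theorem dist_resolvent_le (h : EVIResolvent D g J) {lam mu : ℝ} (hlam : 0 < lam) (hmu : 0 < mu)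
    (x : H) : dist (J lam x) (J mu (J lam x)) ≤ mu * (dist x (J lam x) / lam) := by
  set y := J lam x with hy
  set z := J mu y with hz
  have h1 := h.evi lam hlam x z (h.mem mu hmu y)
  have h2 := h.evi mu hmu y y (h.mem lam hlam x)
  rw [← hy] at h1
  rw [← hz, dist_self, dist_comm z y] at h2
  rcases (dist_nonneg (x := y) (y := z)).eq_or_lt with h0 | h0
  · rw [← h0]; positivity
  have htri : dist x z ^ 2 ≤ (dist x y + dist y z) ^ 2 :=
    pow_le_pow_left₀ dist_nonneg (dist_triangle x y z) 2
  have h3 : lam * dist y z ^ 2 ≤ mu * (dist x y * dist y z) := by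
    have h1' := mul_le_mul_of_nonneg_left (h1.trans (by linarith :
      _ ≤ 2 * (dist x y * dist y z))) hmu.le
    have h2' := mul_le_mul_of_nonneg_left h2 hlam.le
    linarith
  rw [← mul_div_assoc, le_div_iff₀ hlam]
  refine le_of_mul_le_mul_right ?_ h0
  linarith

theorem dist_iterate_self_le [CompleteSpace H] (h : EVIResolvent D g J) (hH : HadamardSpace H)
    {lam L : ℝ} (hlam : 0 < lam) {y : H} (hL : dist y (J lam y) ≤ lam * L) (m : ℕ) :
    dist ((J lam)^[m] y) y ≤ m * lam * L := by
  induction m with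
  | zero => simp
  | succ m ih =>
    have h1 := h.dist_iterate_le hH hlam m (J lam y) y
    rw [dist_comm (J lam y)] at h1
    rw [Function.iterate_succ_apply]
    have h2 := dist_triangle ((J lam)^[m] (J lam y)) ((J lam)^[m] y) y
    push_cast
    linarith

/-- The Crandall–Liggett comparison of two discrete flows with different step sizes. -/
theorem sq_dist_iterate_iterate_le [CompleteSpace H] (h : EVIResolvent D g J)
    (hH : HadamardSpace H) {lam mu L : ℝ} (hlam : 0 < lam) (hmu : 0 < mu) {y : H}
    (hL : ∀ s > (0 : ℝ), dist y (J s y) ≤ s * L) (i j : ℕ) :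
    dist ((J lam)^[i] y) ((J mu)^[j] y) ^ 2 ≤
      L ^ 2 * ((i * lam - j * mu) ^ 2 + i * lam ^ 2 + j * mu ^ 2) := by
  induction i generalizing j with
  | zero =>
    have h1 := pow_le_pow_left₀ dist_nonneg (h.dist_iterate_self_le hH hmu (hL mu hmu) j) 2
    rw [dist_comm] at h1
    have h2 : 0 ≤ L ^ 2 * (j * mu ^ 2) := by positivity
    simp only [Function.iterate_zero, id, Nat.cast_zero]
    linarith
  | succ i ihi =>
    induction j with
    | zero =>
      have h1 := pow_le_pow_left₀ dist_nonneg
        (h.dist_iterate_self_le hH hlam (hL lam hlam) (i + 1)) 2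
      have h2 : 0 ≤ L ^ 2 * ((i + 1 : ℕ) * lam ^ 2) := by positivity
      simp only [Function.iterate_zero, id, Nat.cast_zero]
      linarith
    | succ j ihj =>
      have hi := ihi (j + 1)
      rw [Function.iterate_succ_apply'] at ihj ⊢
      rw [Function.iterate_succ_apply'] at hi ⊢
      set u := (J lam)^[i] y
      set v := (J mu)^[j] y
      have hu := h.evi lam hlam u _ (h.mem mu hmu v)
      have hv := h.evi mu hmu v _ (h.mem lam hlam u)
      rw [dist_comm (J mu v) (J lam u), dist_comm v (J lam u)] at hv
      have hu' := mul_le_mul_of_nonneg_left hu hmu.le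
      have hv' := mul_le_mul_of_nonneg_left hv hlam.le
      have hi' := mul_le_mul_of_nonneg_left hi hmu.le
      have hj' := mul_le_mul_of_nonneg_left ihj hlam.le
      have p1 : 0 ≤ mu * dist u (J lam u) ^ 2 := by positivity
      have p2 : 0 ≤ lam * dist v (J mu v) ^ 2 := by positivity
      refine le_of_mul_le_mul_left ?_ (add_pos hlam hmu)
      push_cast at *
      linarith

/-- Two resolvent approximations of the flow at a common time, started at a resolvent value. -/
theorem dist_approx_resolvent_le [CompleteSpace H] (h : EVIResolvent D g J)
    (hH : HadamardSpace H) {lam t : ℝ} (hlam : 0 < lam) (ht : 0 < t) (x : H) {m k : ℕ}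
    (hm : 0 < m) (hk : 0 < k) :
    dist ((J (t / m))^[m] (J lam x)) ((J (t / k))^[k] (J lam x)) ≤
      dist x (J lam x) / lam * t * √(1 / m + 1 / k) := by
  have hm' : (0 : ℝ) < m := by exact_mod_cast hm
  have hk' : (0 : ℝ) < k := by exact_mod_cast hk
  have h1 := h.sq_dist_iterate_iterate_le hH (div_pos ht hm') (div_pos ht hk')
    (fun s hs => h.dist_resolvent_le hlam hs x) m k
  refine le_of_sq_le_sq (h1.trans (le_of_eq ?_)) (by positivity)
  rw [mul_pow, mul_pow, Real.sq_sqrt (by positivity)]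
  field_simp
  ring

theorem dist_approx_le [CompleteSpace H] (h : EVIResolvent D g J)
    (hH : HadamardSpace H) {lam t : ℝ} (hlam : 0 < lam) (ht : 0 < t) (x : H) {m k : ℕ}
    (hm : 0 < m) (hk : 0 < k) :
    dist ((J (t / m))^[m] x) ((J (t / k))^[k] x) ≤
      2 * dist x (J lam x) + dist x (J lam x) / lam * t * √(1 / m + 1 / k) := by
  have hm' : (0 : ℝ) < m := by exact_mod_cast hm
  have hk' : (0 : ℝ) < k := by exact_mod_cast hk
  have h1 := h.dist_approx_resolvent_le hH hlam ht x hm hk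
  have h2 := h.dist_iterate_le hH (div_pos ht hm') m x (J lam x)
  have h3 := h.dist_iterate_le hH (div_pos ht hk') k (J lam x) x
  rw [dist_comm (J lam x) x] at h3
  have h4 := dist_triangle4 ((J (t / m))^[m] x) ((J (t / m))^[m] (J lam x))
    ((J (t / k))^[k] (J lam x)) ((J (t / k))^[k] x)
  linarith

theorem sq_dist_resolvent_resolvent_le (h : EVIResolvent D g J) {lam mu : ℝ} (hmu : 0 < mu)
    (hle : mu ≤ lam) (x : H) :
    dist (J lam x) (J mu x) ^ 2 ≤ dist x (J lam x) ^ 2 - dist x (J mu x) ^ 2 := by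
  rcases hle.eq_or_lt with rfl | hlt
  · simp
  have hlam := hmu.trans hlt
  have h1 := h.evi lam hlam x _ (h.mem mu hmu x)
  have h2 := h.evi mu hmu x _ (h.mem lam hlam x)
  rw [dist_comm (J mu x) (J lam x)] at h2
  have h1' := mul_le_mul_of_nonneg_left h1 hmu.le
  have h2' := mul_le_mul_of_nonneg_left h2 hlam.le
  have h3 : 0 ≤ mu * dist (J lam x) (J mu x) ^ 2 := by positivity
  refine le_of_mul_le_mul_left ?_ (sub_pos.2 hlt)
  linarith

theorem exists_tendsto_resolvent [CompleteSpace H] (h : EVIResolvent D g J) {t : ℝ} (ht : 0 < t)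
    (x : H) : ∃ p, Tendsto (fun m : ℕ => J (t / m) x) atTop (𝓝 p) := by
  have hsq : ∀ m k : ℕ, m ≤ k →
      dist (J (t / (m + 1 : ℕ)) x) (J (t / (k + 1 : ℕ)) x) ^ 2 ≤
        dist x (J (t / (m + 1 : ℕ)) x) ^ 2 - dist x (J (t / (k + 1 : ℕ)) x) ^ 2 := by
    intro m k hmk
    refine h.sq_dist_resolvent_resolvent_le (by positivity) ?_ x
    gcongr
  set d : ℕ → ℝ := fun m => dist x (J (t / (m + 1 : ℕ)) x) ^ 2 with hd
  have hanti : Antitone d := fun m k hmk => by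
    have := (sq_nonneg _).trans (hsq m k hmk)
    simp only [hd]
    linarith
  have hbdd : BddBelow (Set.range d) := ⟨0, by rintro _ ⟨m, rfl⟩; positivity⟩
  have hlim := tendsto_atTop_ciInf hanti hbdd
  have hcau : CauchySeq (fun m : ℕ => J (t / (m + 1 : ℕ)) x) := by
    refine cauchySeq_of_le_tendsto_0' (fun m => √(d m - ⨅ i, d i)) ?_ ?_
    · intro m k hmk
      refine Real.le_sqrt_of_sq_le ((hsq m k hmk).trans ?_)
      exact sub_le_sub_left (ciInf_le hbdd k) _
    · have := (hlim.sub_const (⨅ i, d i)).sqrt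
      simpa using this
  obtain ⟨p, hp⟩ := cauchySeq_tendsto_of_complete hcau
  exact ⟨p, (tendsto_add_atTop_iff_nat (f := fun m : ℕ => J (t / m) x) 1).1 hp⟩

/-- The gradient flow of any point, not necessarily in the closure of the domain, exists. -/
theorem exists_isGradientFlowPt [CompleteSpace H] (h : EVIResolvent D g J)
    (hH : HadamardSpace H) {t : ℝ} (ht : 0 < t) (x : H) : ∃ s, IsGradientFlowPt J t x s := by
  refine cauchySeq_tendsto_of_complete (Metric.cauchySeq_iff'.2 fun ε hε => ?_)
  have hδ : 0 < ε / 7 := by positivity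
  set δ := ε / 7 with hδε
  obtain ⟨p, hp⟩ := h.exists_tendsto_resolvent ht x
  have hnear : ∀ᶠ m : ℕ in atTop, dist (J (t / m) x) p < δ := hp (Metric.ball_mem_nhds p hδ)
  obtain ⟨k, hk, hk0⟩ := (hnear.and (eventually_gt_atTop 0)).exists
  have hk' : (0 : ℝ) < t / k := by positivity
  set y := J (t / k) x with hy
  set L := dist x y / (t / k) with hL
  have hL0 : 0 ≤ L := by positivity
  have hslope : ∀ᶠ m : ℕ in atTop, t / m * L < δ := by
    have : Tendsto (fun m : ℕ => t / m * L) atTop (𝓝 (0 * L)) :=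
      (tendsto_const_div_atTop_nhds_zero_nat t).mul_const L
    rw [zero_mul] at this
    exact this.eventually_lt_const hδ
  have hrate : ∀ᶠ m : ℕ in atTop, L * t * √(2 / m) < δ := by
    have : Tendsto (fun m : ℕ => L * t * √(2 / m)) atTop (𝓝 (L * t * √0)) :=
      (tendsto_const_div_atTop_nhds_zero_nat 2).sqrt.const_mul _
    rw [Real.sqrt_zero, mul_zero] at this
    exact this.eventually_lt_const hδ
  obtain ⟨N, hN⟩ := eventually_atTop.1
    (hnear.and (hslope.and (hrate.and (eventually_gt_atTop 0))))
  have hcomp : ∀ n ≥ N, dist ((J (t / n))^[n] x) ((J (t / n))^[n] y) < 3 * δ := by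
    intro n hn
    obtain ⟨h1, h2, -, h4⟩ := hN n hn
    have htn : 0 < t / (n : ℝ) := by positivity
    obtain ⟨i, rfl⟩ := Nat.exists_eq_succ_of_ne_zero h4.ne'
    have h5 := h.dist_iterate_le hH htn i (J (t / (i.succ : ℕ)) x) (J (t / (i.succ : ℕ)) y)
    rw [Function.iterate_succ_apply, Function.iterate_succ_apply]
    have h6 := h.dist_resolvent_le hk' htn x
    rw [← hy, ← hL] at h6
    have h7 := dist_triangle4 (J (t / (i.succ : ℕ)) x) p y (J (t / (i.succ : ℕ)) y)
    rw [dist_comm p y] at h7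
    linarith
  refine ⟨N, fun n hn => ?_⟩
  obtain ⟨-, -, h3, h4⟩ := hN N le_rfl
  have h5 := h.dist_approx_resolvent_le hH hk' ht x (hN n hn).2.2.2 h4
  rw [← hy, ← hL] at h5
  have h6 : √(1 / n + 1 / N : ℝ) ≤ √(2 / N) := by
    apply Real.sqrt_le_sqrt
    have h7 : (1 / n : ℝ) ≤ 1 / N := by gcongr
    calc (1 / n + 1 / N : ℝ) ≤ 1 / N + 1 / N := by gcongr
      _ = 2 / N := by ring
  have h7 : L * t * √(1 / n + 1 / N : ℝ) ≤ L * t * √(2 / N) := by gcongr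
  have h8 := hcomp n hn
  have h9 := hcomp N le_rfl
  rw [dist_comm] at h9
  have h10 := dist_triangle4 ((J (t / n))^[n] x) ((J (t / n))^[n] y) ((J (t / N))^[N] y)
    ((J (t / N))^[N] x)
  linarith

theorem dist_isGradientFlowPt_le [CompleteSpace H] (h : EVIResolvent D g J)
    (hH : HadamardSpace H) {lam t : ℝ} (hlam : 0 < lam) (ht : 0 < t) {x s : H}
    (hs : IsGradientFlowPt J t x s) {m : ℕ} (hm : 0 < m) :
    dist ((J (t / m))^[m] x) s ≤
      2 * dist x (J lam x) + dist x (J lam x) / lam * t * √(1 / m) := by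
  have hlim : Tendsto (fun k : ℕ => 2 * dist x (J lam x)
      + dist x (J lam x) / lam * t * √(1 / m + 1 / k)) atTop
      (𝓝 (2 * dist x (J lam x) + dist x (J lam x) / lam * t * √(1 / m + 0))) :=
    (((tendsto_const_div_atTop_nhds_zero_nat 1).const_add _).sqrt.const_mul _).const_add _
  rw [add_zero] at hlim
  refine le_of_tendsto_of_tendsto (tendsto_const_nhds.dist hs) hlim ?_
  filter_upwards [eventually_gt_atTop 0] with k hk using h.dist_approx_le hH hlam ht x hm hk

/-- Points in the closure of the domain are approximated by their resolvents. -/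
theorem exists_dist_resolvent_lt (h : EVIResolvent D g J) {x : H} (hx : x ∈ closure D) {ε : ℝ}
    (hε : 0 < ε) : ∃ lam > 0, dist x (J lam x) < ε := by
  obtain ⟨z, hz, hxz⟩ := Metric.mem_closure_iff.1 hx (ε / 2) (by positivity)
  set K := |g z - g (J 1 x)| + 1 with hK
  have hK0 : 0 < K := by positivity
  set lam := min 1 (ε ^ 2 / (4 * K)) with hlam
  have hlam0 : 0 < lam := by positivity
  have hlamK : lam * K ≤ ε ^ 2 / 4 := by
    calc lam * K ≤ ε ^ 2 / (4 * K) * K := by gcongr; exact min_le_right _ _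
      _ = ε ^ 2 / 4 := by field_simp
  refine ⟨lam, hlam0, ?_⟩
  have h1 := h.evi lam hlam0 x z hz
  have h2 := h.evi 1 one_pos x _ (h.mem lam hlam0 x)
  have h3 := h.sq_dist_resolvent_resolvent_le hlam0 (min_le_left _ _) x
  have h4 : g z - g (J lam x) ≤ K := by
    have := le_abs_self (g z - g (J 1 x))
    nlinarith [sq_nonneg (dist (J 1 x) (J lam x))]
  have h5 := mul_le_mul_of_nonneg_left h4 hlam0.le
  have h6 : dist x z ^ 2 ≤ (ε / 2) ^ 2 := pow_le_pow_left₀ dist_nonneg hxz.le 2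
  have h7 : 0 ≤ dist (J lam x) z ^ 2 := sq_nonneg _
  have h8 : 0 < ε ^ 2 := by positivity
  exact lt_of_pow_lt_pow_left₀ 2 hε.le (by linarith)

/-- Pointwise convergence of nonexpansive resolvents passes to iterates. -/
theorem tendsto_iterate [CompleteSpace H] (h : EVIResolvent D g J) (hH : HadamardSpace H)
    {Dn : ℕ → Set H} {gn : ℕ → H → ℝ} {Jn : ℕ → ℝ → H → H}
    (hn : ∀ n, EVIResolvent (Dn n) (gn n) (Jn n)) {lam : ℝ} (hlam : 0 < lam)
    (hres : ∀ x ∈ closure D, Tendsto (fun n => Jn n lam x) atTop (𝓝 (J lam x)))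
    {x : H} (hx : x ∈ closure D) (m : ℕ) :
    Tendsto (fun n => (Jn n lam)^[m] x) atTop (𝓝 ((J lam)^[m] x)) := by
  have hmem : ∀ i, (J lam)^[i] x ∈ closure D := by
    rintro (_ | i)
    · exact hx
    · rw [Function.iterate_succ_apply']
      exact subset_closure (h.mem lam hlam _)
  induction m with
  | zero => simp
  | succ m ih =>
    simp only [Function.iterate_succ_apply']
    rw [tendsto_iff_dist_tendsto_zero] at ih ⊢
    have h1 := tendsto_iff_dist_tendsto_zero.1 (hres _ (hmem m))
    have h2 := ih.add h1
    rw [add_zero] at h2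
    refine squeeze_zero (fun _ => dist_nonneg) (fun n => ?_) h2
    exact (dist_triangle _ (Jn n lam ((J lam)^[m] x)) _).trans
      (add_le_add_left ((hn n).dist_le hH hlam _ _) _)

end EVIResolvent

/-- If the resolvents of `fn` converge to those of `f` at every point of the
closure of the domain of `f`, then the gradient flow semigroups converge as well. -/
theorem resolvent_convergence_implies_semigroup_convergence
    {H : Type*} [MetricSpace H] [CompleteSpace H] (hH : HadamardSpace H)
    (f : H → EReal) (fn : ℕ → H → EReal)
    (hf : ProperConvexLsc f) (hfn : ∀ n, ProperConvexLsc (fn n))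
    (J : ℝ → H → H) (Jn : ℕ → ℝ → H → H)
    (hJ : ∀ lam > (0:ℝ), ∀ x : H, IsResolventPt f lam x (J lam x))
    (hJn : ∀ n, ∀ lam > (0:ℝ), ∀ x : H, IsResolventPt (fn n) lam x (Jn n lam x))
    (S : ℝ → H → H) (Sn : ℕ → ℝ → H → H)
    (hS : ∀ t > (0:ℝ), ∀ x y : H, IsGradientFlowPt J t x y → S t x = y)
    (hSn : ∀ n, ∀ t > (0:ℝ), ∀ x y : H, IsGradientFlowPt (Jn n) t x y → Sn n t x = y)
    (hres : ∀ x ∈ closure {y : H | f y ≠ ⊤}, ∀ lam > (0:ℝ),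
        Tendsto (fun n => Jn n lam x) atTop (𝓝 (J lam x))) :
    ∀ x ∈ closure {y : H | f y ≠ ⊤}, ∀ t > (0:ℝ),
        Tendsto (fun n => Sn n t x) atTop (𝓝 (S t x)) := by
  have h := hf.eviResolvent hH hJ
  have hn := fun n => (hfn n).eviResolvent hH (hJn n)
  intro x hx t ht
  rw [Metric.tendsto_nhds]
  intro ε hε
  have hδ : 0 < ε / 7 := by positivity
  set δ := ε / 7 with hδε
  obtain ⟨lam, hlam, hxlam⟩ := h.exists_dist_resolvent_lt hx hδ
  have hrate : ∀ᶠ m : ℕ in atTop, δ / lam * t * √(1 / m) < δ := by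
    have : Tendsto (fun m : ℕ => δ / lam * t * √(1 / m)) atTop (𝓝 (δ / lam * t * √0)) :=
      (tendsto_const_div_atTop_nhds_zero_nat 1).sqrt.const_mul _
    rw [Real.sqrt_zero, mul_zero] at this
    exact this.eventually_lt_const hδ
  obtain ⟨m, hm, hm0⟩ := (hrate.and (eventually_gt_atTop 0)).exists
  have htm : 0 < t / (m : ℝ) := by positivity
  have hbound : ∀ d : ℝ, d < δ → 2 * d + d / lam * t * √(1 / m) < 3 * δ := by
    intro d hd
    have : d / lam * t * √(1 / m) ≤ δ / lam * t * √(1 / m) := by gcongr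
    linarith
  have hiter := h.tendsto_iterate hH hn htm (fun z hz => hres z hz _ htm) hx m
  have hdist : Tendsto (fun n => dist x (Jn n lam x)) atTop (𝓝 (dist x (J lam x))) :=
    tendsto_const_nhds.dist (hres x hx lam hlam)
  obtain ⟨s, hs⟩ := h.exists_isGradientFlowPt hH ht x
  rw [hS t ht x s hs]
  filter_upwards [hdist.eventually_lt_const hxlam, Metric.tendsto_nhds.1 hiter δ hδ]
    with n hn1 hn2
  obtain ⟨r, hr⟩ := (hn n).exists_isGradientFlowPt hH ht x
  rw [hSn n t ht x r hr]
  have h1 := ((hn n).dist_isGradientFlowPt_le hH hlam ht hr hm0).trans_lt (hbound _ hn1)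
  have h2 := (h.dist_isGradientFlowPt_le hH hlam ht hs hm0).trans_lt (hbound _ hxlam)
  rw [dist_comm] at h1
  have h3 := dist_triangle4 r ((Jn n (t / m))^[m] x) ((J (t / m))^[m] x) s
  linarith
end

section
/- Let (H,d) be a Hadamard space and let f, f^n : H → (−∞,∞] (n ∈ ℕ) be proper convex lower semicontinuous functions such that f^n → f in the sense of Mosco. Then for every x₀ ∈ H there exist constants α, β > 0 such that f^n(y) ≥ −α·d(y,x₀) − β for every y ∈ H and every n ∈ ℕ. -/
open Filter Topology
open scoped Classical

/-- The asymptotic radius of `x` along the filter `F`: the infimum of the radii of closed balls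
that eventually contain `x`. -/
noncomputable def asymptoticRadius {H ι : Type*} [MetricSpace H] (x : ι → H) (F : Filter ι) : ℝ :=
  sInf {b : ℝ | 0 ≤ b ∧ ∃ y, ∀ᶠ n in F, dist y (x n) ≤ b}

section AsymptoticRadius

variable {H ι : Type*} [MetricSpace H] {x : ι → H} {F : Filter ι}

theorem asymptoticRadius_nonneg (x : ι → H) (F : Filter ι) : 0 ≤ asymptoticRadius x F :=
  Real.sInf_nonneg fun _ hb => hb.1

theorem asymptoticRadius_le {y : H} {b : ℝ} (hb : 0 ≤ b) (h : ∀ᶠ n in F, dist y (x n) ≤ b) :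
    asymptoticRadius x F ≤ b :=
  csInf_le ⟨0, fun _ hb => hb.1⟩ ⟨hb, y, h⟩

theorem asymptoticRadius_mono {z : H} {R : ℝ} (hR : ∀ n, dist z (x n) ≤ R) :
    Monotone (asymptoticRadius x) := by
  intro F G hFG
  refine csInf_le_csInf ⟨0, fun _ hb => hb.1⟩ ⟨|R|, abs_nonneg R, z, ?_⟩ ?_
  · exact Eventually.of_forall fun n => (hR n).trans (le_abs_self R)
  · rintro b ⟨hb, y, hy⟩
    exact ⟨hb, y, hFG hy⟩

theorem exists_eventually_dist_le_of_asymptoticRadius_lt {z : H} {R b : ℝ}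
    (hR : ∀ n, dist z (x n) ≤ R) (hb : asymptoticRadius x F < b) :
    ∃ y, ∀ᶠ n in F, dist y (x n) ≤ b := by
  have hne : {b : ℝ | 0 ≤ b ∧ ∃ y, ∀ᶠ n in F, dist y (x n) ≤ b}.Nonempty :=
    ⟨|R|, abs_nonneg R, z, Eventually.of_forall fun n => (hR n).trans (le_abs_self R)⟩
  obtain ⟨a, ⟨-, y, hy⟩, hab⟩ := exists_lt_of_csInf_lt hne hb
  exact ⟨y, hy.mono fun n hn => hn.trans hab.le⟩

/-- Two almost-centers of `x` along `F` are close to each other. -/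
theorem dist_sq_le_of_eventually_dist_le [CompleteSpace H] (hH : HadamardSpace H) [F.NeBot]
    {y y' : H} {b : ℝ} (hy : ∀ᶠ n in F, dist y (x n) ≤ b) (hy' : ∀ᶠ n in F, dist y' (x n) ≤ b) :
    dist y y' ^ 2 ≤ 4 * (b ^ 2 - asymptoticRadius x F ^ 2) := by
  obtain ⟨γ, hγ, rfl, rfl⟩ := hH.geodesic y y'
  have key : ∀ᶠ n in F,
      dist (γ (1 / 2)) (x n) ^ 2 ≤ b ^ 2 - dist (γ 0) (γ 1) ^ 2 / 4 := by
    filter_upwards [hy, hy'] with n h0 h1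
    have h := hH.cat0 (x n) γ hγ (1 / 2) (by norm_num)
    rw [dist_comm (x n) (γ (1 / 2)), dist_comm (x n) (γ 0), dist_comm (x n) (γ 1)] at h
    have h0' := pow_le_pow_left₀ dist_nonneg h0 2
    have h1' := pow_le_pow_left₀ dist_nonneg h1 2
    linarith
  obtain ⟨n, hn⟩ := key.exists
  have hnonneg : 0 ≤ b ^ 2 - dist (γ 0) (γ 1) ^ 2 / 4 := (sq_nonneg _).trans hn
  have hle := asymptoticRadius_le (Real.sqrt_nonneg _)
    (key.mono fun n hn => Real.le_sqrt_of_sq_le hn)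
  have hsq := (Real.le_sqrt (asymptoticRadius_nonneg x F) hnonneg).1 hle
  linarith

/-- Existence of an asymptotic center along a filter. -/
theorem exists_asymptoticCenter [CompleteSpace H] (hH : HadamardSpace H) [F.NeBot]
    {z : H} {R : ℝ} (hR : ∀ n, dist z (x n) ≤ R) :
    ∃ c, ∀ b, asymptoticRadius x F < b → ∀ᶠ n in F, dist c (x n) < b := by
  set r := asymptoticRadius x F
  have hex : ∀ k : ℕ, ∃ y, ∀ᶠ n in F, dist y (x n) ≤ r + 1 / ((k : ℝ) + 1) := fun k =>
    exists_eventually_dist_le_of_asymptoticRadius_lt hR (by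
      have : 0 < 1 / ((k : ℝ) + 1) := Nat.one_div_pos_of_nat
      linarith)
  choose y hy using hex
  have hlim : Tendsto (fun k : ℕ => r + 1 / ((k : ℝ) + 1)) atTop (𝓝 r) := by
    simpa using tendsto_const_nhds.add (tendsto_one_div_add_atTop_nhds_zero_nat (𝕜 := ℝ))
  have hlim' : Tendsto (fun k : ℕ => √(4 * ((r + 1 / ((k : ℝ) + 1)) ^ 2 - r ^ 2)))
      atTop (𝓝 0) := by
    have h := (((hlim.pow 2).sub_const (r ^ 2)).const_mul 4).sqrt
    rwa [sub_self, mul_zero, Real.sqrt_zero] at h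
  have hcau : CauchySeq y := by
    refine cauchySeq_of_le_tendsto_0' _ (fun k l hkl => ?_) hlim'
    refine Real.le_sqrt_of_sq_le (dist_sq_le_of_eventually_dist_le hH (hy k) ?_)
    refine (hy l).mono fun n hn => hn.trans ?_
    have := Nat.one_div_le_one_div (α := ℝ) hkl
    linarith
  obtain ⟨c, hc⟩ := cauchySeq_tendsto_of_complete hcau
  refine ⟨c, fun b hb => ?_⟩
  have hsum : Tendsto (fun k : ℕ => dist c (y k) + (r + 1 / ((k : ℝ) + 1))) atTop (𝓝 r) := by
    have := (tendsto_const_nhds (x := c)).dist hc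
    simpa using this.add hlim
  obtain ⟨k, hk⟩ := (hsum.eventually_lt_const hb).exists
  filter_upwards [hy k] with n hn
  exact ((dist_triangle c (y k) (x n)).trans (by linarith)).trans_lt hk

end AsymptoticRadius

/-- A monotone nonnegative function of filters is minimal at some countably generated
filter finer than a given one. -/
theorem exists_isCountablyGenerated_minimal {α : Type*} {ρ : Filter α → ℝ} (hρ : Monotone ρ)
    (hρ0 : ∀ F, 0 ≤ ρ F) (F₀ : Filter α) [F₀.NeBot] [F₀.IsCountablyGenerated] :
    ∃ F ≤ F₀, F.NeBot ∧ F.IsCountablyGenerated ∧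
      ∀ G ≤ F, G.NeBot → G.IsCountablyGenerated → ρ F ≤ ρ G := by
  let P := {F : Filter α // F.NeBot ∧ F.IsCountablyGenerated}
  have step : ∀ (k : ℕ) (F : P), ∃ G : P, G.1 ≤ F.1 ∧
      ∀ K : P, K.1 ≤ F.1 → ρ G.1 ≤ ρ K.1 + 1 / ((k : ℝ) + 1) := by
    intro k F
    let S : Set ℝ := (fun G : P => ρ G.1) '' {G : P | G.1 ≤ F.1}
    have hS : BddBelow S := ⟨0, by rintro _ ⟨G, -, rfl⟩; exact hρ0 _⟩
    have hlt : sInf S < sInf S + 1 / ((k : ℝ) + 1) := by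
      have : 0 < 1 / ((k : ℝ) + 1) := Nat.one_div_pos_of_nat
      linarith
    obtain ⟨_, ⟨G, hG, rfl⟩, hGlt⟩ :=
      exists_lt_of_csInf_lt (Set.Nonempty.image _ ⟨F, le_refl F.1⟩) hlt
    refine ⟨G, hG, fun K hK => hGlt.le.trans ?_⟩
    have := csInf_le hS ⟨K, hK, rfl⟩
    simpa using this
  choose next hnext_le hnext using step
  let u : ℕ → P := fun k => Nat.rec ⟨F₀, ‹_›, ‹_›⟩ (fun k F => next k F) k
  have hu : Antitone fun k => (u k).1 := antitone_nat_of_succ_le fun k => hnext_le k (u k)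
  have := fun k => (u k).2.2
  refine ⟨⨅ k, (u k).1, iInf_le _ 0, ?_, inferInstance, fun G hG hG1 hG2 => ?_⟩
  · exact iInf_neBot_of_directed' hu.directed_ge fun k => (u k).2.1
  · refine le_of_forall_pos_le_add fun ε hε => ?_
    obtain ⟨k, hk⟩ := exists_nat_one_div_lt hε
    calc ρ (⨅ k, (u k).1) ≤ ρ (u (k + 1)).1 := hρ (iInf_le (fun k => (u k).1) (k + 1))
      _ ≤ ρ G + 1 / ((k : ℝ) + 1) := hnext k (u k) ⟨G, hG1, hG2⟩ (hG.trans (iInf_le _ k))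
      _ ≤ ρ G + ε := by linarith

/-- Weak sequential compactness: along a finer filter, a bounded sequence has a weak limit, and
replacing the remaining terms by that limit yields a weakly convergent sequence. -/
theorem exists_weakConvSeq_ite {H : Type*} [MetricSpace H] [CompleteSpace H]
    (hH : HadamardSpace H) {x : ℕ → H} {z : H} {R : ℝ} (hR : ∀ n, dist z (x n) ≤ R)
    (F₀ : Filter ℕ) [F₀.NeBot] [F₀.IsCountablyGenerated] (hF₀ : F₀ ≤ atTop) :
    ∃ (c : H) (θ : ℕ → ℕ), StrictMono θ ∧ Tendsto θ atTop F₀ ∧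
      Bornology.IsBounded (Set.range fun n => if n ∈ Set.range θ then x n else c) ∧
      WeakConvSeq (fun n => if n ∈ Set.range θ then x n else c) c := by
  obtain ⟨F, hFF₀, hF, hFc, hmin⟩ := exists_isCountablyGenerated_minimal
    (asymptoticRadius_mono hR) (asymptoticRadius_nonneg x) F₀
  obtain ⟨c, hc⟩ := exists_asymptoticCenter hH (F := F) hR
  have hne : (F ⊓ map (fun n : ℕ => n) atTop).NeBot := by
    rwa [map_id', inf_eq_left.2 (hFF₀.trans hF₀)]
  obtain ⟨θ, hθ, hθF⟩ := subseq_tendsto_of_neBot hne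
  have hθF' : atTop ⊓ 𝓟 (Set.range θ) ≤ F := by
    refine le_trans (fun s hs => ?_) hθF
    obtain ⟨N, hN⟩ := mem_atTop_sets.1 (mem_map.1 hs)
    refine mem_inf_principal.2 (mem_of_superset (mem_atTop (θ N)) ?_)
    rintro _ hm ⟨k, rfl⟩
    exact hN k (hθ.le_iff_le.1 hm)
  have hbdd : Bornology.IsBounded (Set.range fun n => if n ∈ Set.range θ then x n else c) := by
    refine (Metric.isBounded_closedBall (x := z) (r := max R (dist z c))).subset ?_
    rintro _ ⟨n, rfl⟩
    rw [Metric.mem_closedBall, dist_comm]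
    dsimp only
    split_ifs
    · exact (hR n).trans (le_max_left _ _)
    · exact le_max_right _ _
  refine ⟨c, θ, hθ, hθF.mono_right hFF₀, hbdd, fun φ hφ y => ?_⟩
  set xs : ℕ → H := fun n => if n ∈ Set.range θ then x n else c with hxs
  have hbound : IsBoundedUnder (· ≤ ·) atTop fun n => dist y ((xs ∘ φ) n) ^ 2 := by
    obtain ⟨B, hB⟩ := hbdd.subset_closedBall y
    refine isBoundedUnder_of ⟨B ^ 2, fun n => pow_le_pow_left₀ dist_nonneg ?_ 2⟩
    rw [dist_comm]
    exact hB ⟨φ n, rfl⟩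
  refine le_of_forall_gt_imp_ge_of_dense fun b' hb' => ?_
  obtain ⟨b, hb, hbb'⟩ := exists_between hb'
  have hyb := eventually_lt_of_limsup_lt hb hbound
  have hb0 : 0 ≤ b := by
    obtain ⟨n, hn⟩ := hyb.exists
    exact (sq_nonneg _).trans hn.le
  let G := map φ atTop ⊓ 𝓟 (Set.range θ)
  have hGF : G ≤ F := (inf_le_inf_right _ hφ.tendsto_atTop).trans hθF'
  have hcG : ∀ᶠ n in G, dist c (x n) < √b' := by
    rcases eq_or_neBot G with hG | hG
    · rw [hG]
      exact eventually_bot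
    · refine hGF (hc _ ((hmin G hGF hG inferInstance).trans_lt ?_))
      refine lt_of_le_of_lt (asymptoticRadius_le (y := y) (Real.sqrt_nonneg b) ?_)
        (Real.sqrt_lt_sqrt hb0 hbb')
      refine eventually_inf_principal.2 (eventually_map.2 (hyb.mono fun n hn hmem => ?_))
      refine Real.le_sqrt_of_sq_le ?_
      simpa only [hxs, Function.comp_apply, if_pos hmem] using hn.le
  refine limsup_le_of_le (isCoboundedUnder_le_of_le atTop (x := 0) fun n => sq_nonneg _) ?_
  filter_upwards [eventually_map.1 (eventually_inf_principal.1 hcG)] with n hn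
  by_cases hmem : φ n ∈ Set.range θ
  · simp only [hxs, Function.comp_apply, if_pos hmem]
    exact ((Real.lt_sqrt dist_nonneg).1 (hn hmem)).le
  · simp only [hxs, Function.comp_apply, if_neg hmem, dist_self]
    simpa using hb0.trans hbb'.le

/-- A Mosco convergent sequence is eventually uniformly bounded below on bounded sets. -/
theorem MoscoConv.eventually_le_of_mem_closedBall {H : Type*} [MetricSpace H] [CompleteSpace H]
    (hH : HadamardSpace H) {f : H → EReal} {fn : ℕ → H → EReal} (hf : ∀ x, f x ≠ ⊥)
    (hM : MoscoConv fn f) (z : H) (R : ℝ) (hR : 0 ≤ R) :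
    ∃ m : ℝ, ∀ᶠ n in atTop, ∀ w ∈ Metric.closedBall z R, (m : EReal) ≤ fn n w := by
  by_contra! hcon
  obtain ⟨ψ, hψ, hv⟩ := extraction_forall_of_frequently fun k : ℕ => hcon (-(k : ℝ))
  choose v hvR hv using hv
  let x : ℕ → H := Function.extend ψ v fun _ => z
  have hxψ : ∀ k, x (ψ k) = v k := fun k => hψ.injective.extend_apply _ _ k
  have hxR : ∀ n, dist z (x n) ≤ R := by
    intro n
    by_cases hn : ∃ k, ψ k = n
    · obtain ⟨k, rfl⟩ := hn
      rw [hxψ, dist_comm]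
      exact hvR k
    · simpa [x, Function.extend_apply' _ _ _ hn] using hR
  obtain ⟨c, θ, hθ, hθψ, hbdd, hweak⟩ :=
    exists_weakConvSeq_ite hH hxR (map ψ atTop) hψ.tendsto_atTop
  refine hf c (EReal.eq_bot_iff_forall_lt _ |>.2 fun m => ?_)
  obtain ⟨k, hk⟩ := exists_nat_gt (-m)
  have hev : ∀ᶠ n in map ψ atTop, fn n (x n) ≤ ((-(k : ℝ) : ℝ) : EReal) := by
    refine eventually_map.2 ((eventually_ge_atTop k).mono fun j hj => ?_)
    rw [hxψ]
    refine (hv j).le.trans (EReal.coe_le_coe_iff.2 ?_)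
    have : (k : ℝ) ≤ j := by exact_mod_cast hj
    linarith
  refine ((hM.1 c _ hbdd hweak).trans (liminf_le_of_frequently_le ?_)).trans_lt
    (EReal.coe_lt_coe_iff.2 (by linarith : -(k : ℝ) < m))
  refine hθ.tendsto_atTop.frequently (Eventually.frequently ?_)
  filter_upwards [hθψ.eventually hev] with j hj
  rwa [if_pos (Set.mem_range_self j)]

/-- A convex function bounded below on a ball has an affine lower bound. -/
theorem ConvexFun.affine_le {H : Type*} [MetricSpace H] [CompleteSpace H]
    (hH : HadamardSpace H) {g : H → EReal} (hg : ConvexFun g) (hbot : ∀ x, g x ≠ ⊥)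
    {p : H} {δ m M : ℝ} (hδ : 0 < δ) (hM : g p ≤ M)
    (hm : ∀ w ∈ Metric.closedBall p δ, (m : EReal) ≤ g w) (y : H) :
    ((-(|m| + |M|) * (1 + dist y p / δ) : ℝ) : EReal) ≤ g y := by
  by_cases htop : g y = ⊤
  · simp [htop]
  obtain ⟨γ, hγ, h0, h1⟩ := hH.geodesic p y
  set d := dist y p
  have hd0 : 0 ≤ d := dist_nonneg
  have hpos : 0 < δ + d := by linarith
  set t := δ / (δ + d) with ht
  have ht0 : 0 < t := div_pos hδ hpos
  have ht1 : t ≤ 1 := (div_le_one hpos).2 (by linarith)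
  have htd : t * d ≤ δ := by
    rw [ht, div_mul_eq_mul_div, div_le_iff₀ hpos]
    nlinarith
  have hball : γ t ∈ Metric.closedBall p δ := by
    have h := hγ t ⟨ht0.le, ht1⟩ 0 (by norm_num)
    rw [h0, h1, sub_zero, abs_of_pos ht0, dist_comm p y] at h
    rw [Metric.mem_closedBall, h]
    exact htd
  have hconv := (hm _ hball).trans (hg γ hγ t ⟨ht0.le, ht1⟩)
  rw [h0, h1] at hconv
  have hptop : g p ≠ ⊤ := ne_top_of_le_ne_top (EReal.coe_ne_top M) hM
  obtain ⟨a, ha⟩ : ∃ a : ℝ, (a : EReal) = g p := ⟨_, EReal.coe_toReal hptop (hbot p)⟩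
  obtain ⟨b, hb⟩ : ∃ b : ℝ, (b : EReal) = g y := ⟨_, EReal.coe_toReal htop (hbot y)⟩
  rw [← ha, ← hb] at hconv
  rw [← ha] at hM
  rw [← hb]
  norm_cast at hconv hM ⊢
  have hprod : t * (1 + d / δ) = 1 := by
    rw [ht]
    field_simp
  have hfac : 0 ≤ 1 + d / δ := by positivity
  have haM : (1 - t) * a ≤ |M| :=
    calc (1 - t) * a ≤ (1 - t) * |M| :=
          mul_le_mul_of_nonneg_left (hM.trans (le_abs_self M)) (by linarith)
      _ ≤ |M| := by nlinarith [abs_nonneg M]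
  have htb : -(|m| + |M|) ≤ t * b := by linarith [neg_abs_le m]
  calc -(|m| + |M|) * (1 + d / δ) ≤ t * b * (1 + d / δ) :=
        mul_le_mul_of_nonneg_right htb hfac
    _ = b * (t * (1 + d / δ)) := by ring
    _ = b := by rw [hprod, mul_one]

/-- A proper convex lsc function on a Hadamard space has an affine lower bound. -/
theorem ProperConvexLsc.exists_affine_le {H : Type*} [MetricSpace H] [CompleteSpace H]
    (hH : HadamardSpace H) {g : H → EReal} (hg : ProperConvexLsc g) (x₀ : H) :
    ∃ C ≥ (0 : ℝ), ∀ y, ((-C * (dist y x₀ + 1) : ℝ) : EReal) ≤ g y := by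
  obtain ⟨⟨p, hp⟩, hbot, hconv, hlsc⟩ := hg
  obtain ⟨a, ha⟩ : ∃ a : ℝ, (a : EReal) = g p := ⟨_, EReal.coe_toReal hp (hbot p)⟩
  have hlt : ((a - 1 : ℝ) : EReal) < g p := by
    rw [← ha]
    exact EReal.coe_lt_coe_iff.2 (by linarith)
  obtain ⟨δ, hδ, hball⟩ := Metric.nhds_basis_closedBall.eventually_iff.1 (hlsc p _ hlt)
  have h := hconv.affine_le hH hbot hδ ha.ge fun w hw => (hball hw).le
  set K := |a - 1| + |a|
  have hK : 0 ≤ K := by positivity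
  refine ⟨K * (1 + (1 + dist x₀ p) / δ), by positivity, fun y => le_trans ?_ (h y)⟩
  refine EReal.coe_le_coe_iff.2 ?_
  have hdist : dist y p / δ ≤ (1 + dist x₀ p) / δ * (dist y x₀ + 1) := by
    rw [div_mul_eq_mul_div]
    refine div_le_div_of_nonneg_right ?_ hδ.le
    nlinarith [dist_triangle y x₀ p, mul_nonneg (dist_nonneg (x := x₀) (y := p))
      (dist_nonneg (x := y) (y := x₀))]
  have hle : 1 + dist y p / δ ≤ (1 + (1 + dist x₀ p) / δ) * (dist y x₀ + 1) := by
    nlinarith [dist_nonneg (x := y) (y := x₀)]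
  have := mul_le_mul_of_nonneg_left hle hK
  linarith

/-- Mosco convergence yields an affine lower bound valid for all large indices. -/
theorem MoscoConv.eventually_affine_le {H : Type*} [MetricSpace H] [CompleteSpace H]
    (hH : HadamardSpace H) {f : H → EReal} {fn : ℕ → H → EReal} (hf : ProperConvexLsc f)
    (hfn : ∀ n, ProperConvexLsc (fn n)) (hM : MoscoConv fn f) (x₀ : H) :
    ∃ C ≥ (0 : ℝ), ∀ᶠ n in atTop, ∀ y, ((-C * (dist y x₀ + 1) : ℝ) : EReal) ≤ fn n y := by
  obtain ⟨⟨z, hz⟩, hbot, -, -⟩ := hf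
  obtain ⟨m, hm⟩ := hM.eventually_le_of_mem_closedBall hH hbot z 2 zero_le_two
  obtain ⟨M, hzM, -⟩ := EReal.lt_iff_exists_real_btwn.1 (lt_top_iff_ne_top.2 hz)
  obtain ⟨ys, hys, hfys⟩ := hM.2 z
  set K := |m| + |M|
  have hK : 0 ≤ K := by positivity
  refine ⟨K * (2 + dist x₀ z), by positivity, ?_⟩
  filter_upwards [hm, hys.eventually (Metric.closedBall_mem_nhds z one_pos),
    hfys.eventually_lt_const hzM] with n hn hyz hyM y
  refine le_trans (EReal.coe_le_coe_iff.2 ?_) ((hfn n).2.2.1.affine_le hH (hfn n).2.1 one_pos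
    hyM.le (fun w hw => hn w ?_) y)
  · have hle : 1 + dist y (ys n) / 1 ≤ (2 + dist x₀ z) * (dist y x₀ + 1) := by
      rw [div_one]
      nlinarith [dist_triangle y x₀ (ys n), dist_triangle x₀ z (ys n), dist_comm z (ys n),
        dist_nonneg (x := y) (y := x₀), mul_nonneg (dist_nonneg (x := x₀) (y := z))
        (dist_nonneg (x := y) (y := x₀))]
    have := mul_le_mul_of_nonneg_left hle hK
    linarith
  · rw [Metric.mem_closedBall] at hw ⊢
    linarith [dist_triangle w (ys n) z]

/-- If proper convex lsc functions `fn` Mosco-converge to `f` on a Hadamard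
space, then for every `x₀` there are constants `α, β > 0` with
`fn n y ≥ −α·d(y,x₀) − β` for all `y` and `n`. -/
theorem mosco_uniform_affine_lower_bound
    {H : Type*} [MetricSpace H] [CompleteSpace H] (hH : HadamardSpace H)
    (f : H → EReal) (fn : ℕ → H → EReal)
    (hf : ProperConvexLsc f) (hfn : ∀ n, ProperConvexLsc (fn n))
    (hM : MoscoConv fn f) :
    ∀ x₀ : H, ∃ α > (0:ℝ), ∃ β > (0:ℝ), ∀ (y : H) (n : ℕ),
      ((-α * dist y x₀ - β : ℝ) : EReal) ≤ fn n y := by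
  intro x₀
  obtain ⟨C, hC, hev⟩ := hM.eventually_affine_le hH hf hfn x₀
  obtain ⟨N, hN⟩ := eventually_atTop.1 hev
  choose D hD hDn using fun n => (hfn n).exists_affine_le hH x₀
  have hsum : 0 ≤ ∑ n ∈ Finset.range N, D n := Finset.sum_nonneg fun n _ => hD n
  set K := C + ∑ n ∈ Finset.range N, D n + 1
  have hK : 0 < K := by linarith
  have hweaken : ∀ B ≤ K, ∀ y, ((-K * dist y x₀ - K : ℝ) : EReal) ≤
      ((-B * (dist y x₀ + 1) : ℝ) : EReal) := fun B hB y => by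
    refine EReal.coe_le_coe_iff.2 ?_
    nlinarith [dist_nonneg (x := y) (y := x₀)]
  refine ⟨K, hK, K, hK, fun y n => ?_⟩
  rcases le_or_gt N n with hn | hn
  · exact (hweaken C (by linarith) y).trans (hN n hn y)
  · have hle := Finset.single_le_sum (fun k _ => hD k) (Finset.mem_range.2 hn)
    exact (hweaken (D n) (by linarith) y).trans (hDn n y)
end

section
/- Let (H,d) be a Hadamard space, (x_n) ⊂ H a bounded sequence, and x ∈ H. The following are equivalent: (1) (x_n) weakly converges to x; (2) for every geodesic γ:[0,1]→H passing through x, d(x, P_γ(x_n)) → 0 as n → ∞, where P_γ is the metric projection onto the image of γ; (3) for every y ∈ H, d(x, P_{[x,y]}(x_n)) → 0 as n → ∞, where P_{[x,y]} is the metric projection onto the geodesic segment [x,y]. -/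
open Filter Topology
open scoped Classical

theorem IsGeodesic.continuousOn {H : Type*} [MetricSpace H] {γ : ℝ → H} (hγ : IsGeodesic γ) :
    ContinuousOn γ (Set.Icc 0 1) := by
  refine LipschitzOnWith.continuousOn (K := ⟨dist (γ 0) (γ 1), dist_nonneg⟩) ?_
  refine LipschitzOnWith.of_dist_le_mul fun s hs t ht => ?_
  rw [hγ s hs t ht, Real.dist_eq, mul_comm]
  rfl

theorem IsGeodesic.isCompact_image {H : Type*} [MetricSpace H] {γ : ℝ → H} (hγ : IsGeodesic γ) :
    IsCompact (γ '' Set.Icc 0 1) :=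
  isCompact_Icc.image_of_continuousOn hγ.continuousOn

theorem IsGeodesic.segment {H : Type*} [MetricSpace H] {γ : ℝ → H} (hγ : IsGeodesic γ)
    {a b : ℝ} (ha : a ∈ Set.Icc (0 : ℝ) 1) (hb : b ∈ Set.Icc (0 : ℝ) 1) :
    IsGeodesic fun u => γ ((1 - u) * a + u * b) := by
  have hmem : ∀ u ∈ Set.Icc (0 : ℝ) 1, (1 - u) * a + u * b ∈ Set.Icc (0 : ℝ) 1 := fun u hu =>
    convex_Icc (0 : ℝ) 1 ha hb (sub_nonneg.2 hu.2) hu.1 (sub_add_cancel 1 u)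
  intro s hs t ht
  have hab : dist (γ a) (γ b) = |a - b| * dist (γ 0) (γ 1) := hγ a ha b hb
  simp only [hγ _ (hmem s hs) _ (hmem t ht), sub_zero, one_mul, zero_mul, add_zero, sub_self,
    zero_add, hab]
  rw [← mul_assoc, ← abs_mul, ← abs_neg]
  congr 2
  ring

/-- Nearest points on a compact set exist. -/
theorem IsCompact.exists_isProjPt {H : Type*} [MetricSpace H] {C : Set H} (hC : IsCompact C)
    (hne : C.Nonempty) (x : H) : ∃ p, IsProjPt C x p :=
  hC.exists_isMinOn hne (continuous_const.dist continuous_id).continuousOn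

/-- A weak form of the obtuse angle property of the projection onto a geodesic. -/
theorem HadamardSpace.dist_sq_add_le_of_isProjPt {H : Type*} [MetricSpace H] [CompleteSpace H]
    (hH : HadamardSpace H) {γ : ℝ → H} (hγ : IsGeodesic γ) {x p c : H}
    (hp : IsProjPt (γ '' Set.Icc (0 : ℝ) 1) x p) (hc : c ∈ γ '' Set.Icc (0 : ℝ) 1) :
    dist x p ^ 2 + dist c p ^ 2 / 2 ≤ dist x c ^ 2 := by
  obtain ⟨⟨a, ha, rfl⟩, hmin⟩ := hp
  obtain ⟨b, hb, rfl⟩ := hc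
  have hmid := hH.cat0 x _ (hγ.segment ha hb) (1 / 2) (by norm_num)
  have hle := hmin _ ⟨(1 - 1 / 2) * a + 1 / 2 * b,
    ⟨by linarith [ha.1, hb.1], by linarith [ha.2, hb.2]⟩, rfl⟩
  have hsq := pow_le_pow_left₀ dist_nonneg hle 2
  simp only [sub_zero, one_mul, zero_mul, add_zero, sub_self, zero_add] at hmid
  rw [dist_comm (γ b) (γ a)]
  linarith

theorem Bornology.IsBounded.exists_dist_le {H : Type*} [MetricSpace H] {xs : ℕ → H}
    (hxs : Bornology.IsBounded (Set.range xs)) (y : H) : ∃ M, ∀ n, dist y (xs n) ≤ M := by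
  obtain ⟨M, hM⟩ := hxs.subset_closedBall y
  exact ⟨M, fun n => by simpa [dist_comm] using hM (Set.mem_range_self n)⟩

theorem limsup_dist_sq_le_add {H : Type*} [MetricSpace H] {xs : ℕ → H}
    (hxs : Bornology.IsBounded (Set.range xs)) {y z : H} {k : ℝ}
    (h : ∀ᶠ n in atTop, dist y (xs n) ^ 2 ≤ dist z (xs n) ^ 2 + k) :
    limsup (fun n => dist y (xs n) ^ 2) atTop ≤ limsup (fun n => dist z (xs n) ^ 2) atTop + k := by
  obtain ⟨M, hM⟩ := hxs.exists_dist_le z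
  have hbdd : ∀ n, dist z (xs n) ^ 2 ≤ M ^ 2 := fun n => pow_le_pow_left₀ dist_nonneg (hM n) 2
  have hcob : ∀ w, IsCoboundedUnder (· ≤ ·) atTop fun n => dist w (xs n) ^ 2 := fun w =>
    IsBoundedUnder.isCoboundedUnder_le
      (isBoundedUnder_of ⟨0, fun n => sq_nonneg (dist w (xs n))⟩)
  rw [← limsup_add_const atTop _ k (isBoundedUnder_of ⟨M ^ 2, hbdd⟩) (hcob z)]
  exact limsup_le_limsup h (hcob y)
    (isBoundedUnder_of ⟨M ^ 2 + k, fun n => add_le_add_left (hbdd n) k⟩)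

theorem sq_le_sq_add_of_le_add {a b e M : ℝ} (ha : 0 ≤ a) (he : 0 ≤ e) (hbM : b ≤ M)
    (h : a ≤ b + e) : a ^ 2 ≤ b ^ 2 + e * (e + 2 * M) := by
  nlinarith [pow_le_pow_left₀ ha h 2, mul_le_mul_of_nonneg_left hbM he]

theorem tendsto_mul_add_const {e : ℕ → ℝ} (he : Tendsto e atTop (𝓝 0)) (M : ℝ) :
    Tendsto (fun n => e n * (e n + M)) atTop (𝓝 0) := by
  simpa using he.mul (he.add_const M)

theorem WeakConvSeq.tendsto_dist_isProjPt {H : Type*} [MetricSpace H] [CompleteSpace H]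
    (hH : HadamardSpace H) {xs : ℕ → H} (hxs : Bornology.IsBounded (Set.range xs)) {c : H}
    (hw : WeakConvSeq xs c) {γ : ℝ → H} (hγ : IsGeodesic γ) (hc : c ∈ γ '' Set.Icc (0 : ℝ) 1)
    {p : ℕ → H} (hp : ∀ n, IsProjPt (γ '' Set.Icc (0 : ℝ) 1) (xs n) (p n)) :
    Tendsto (fun n => dist c (p n)) atTop (𝓝 0) := by
  by_contra hnot
  obtain ⟨ε, hε, hfreq⟩ : ∃ ε > 0, ∃ᶠ n in atTop, ε ≤ dist c (p n) := by
    simpa [Metric.tendsto_nhds, Real.dist_eq, frequently_atTop] using hnot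
  obtain ⟨φ, hφ, hφε⟩ := extraction_of_frequently_atTop hfreq
  obtain ⟨q, -, ψ, hψ, hq⟩ := hγ.isCompact_image.tendsto_subseq fun n => (hp (φ n)).1
  obtain ⟨M, hM⟩ := hxs.exists_dist_le c
  have he : Tendsto (fun n => dist (p (φ (ψ n))) q) atTop (𝓝 0) :=
    tendsto_iff_dist_tendsto_zero.1 hq
  have hclose : ∀ᶠ n in atTop, dist q (xs (φ (ψ n))) ^ 2
      ≤ dist c (xs (φ (ψ n))) ^ 2 + -(ε ^ 2 / 4) := by
    filter_upwards [(tendsto_mul_add_const he (2 * M)).eventually_lt_const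
      (show 0 < ε ^ 2 / 4 by positivity)] with n hn
    have hpyth := hH.dist_sq_add_le_of_isProjPt hγ (hp (φ (ψ n))) hc
    have hpM : dist (xs (φ (ψ n))) (p (φ (ψ n))) ≤ M :=
      ((hp _).2 c hc).trans ((dist_comm _ _).trans_le (hM _))
    have htri : dist q (xs (φ (ψ n)))
        ≤ dist (xs (φ (ψ n))) (p (φ (ψ n))) + dist (p (φ (ψ n))) q :=
      (dist_comm _ _).trans_le (dist_triangle _ _ _)
    have hsq := sq_le_sq_add_of_le_add dist_nonneg dist_nonneg hpM htri
    have hεsq := pow_le_pow_left₀ hε.le (hφε (ψ n)) 2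
    rw [dist_comm c (xs (φ (ψ n)))]
    linarith
  have hlt := limsup_dist_sq_le_add (xs := xs ∘ (φ ∘ ψ))
    (hxs.subset (Set.range_comp_subset_range _ _)) hclose
  have hmin := hw (φ ∘ ψ) (hφ.comp hψ) q
  have : 0 < ε ^ 2 := by positivity
  linarith

theorem weakConvSeq_of_tendsto_dist_isProjPt {H : Type*} [MetricSpace H] [CompleteSpace H]
    (hH : HadamardSpace H) {xs : ℕ → H} (hxs : Bornology.IsBounded (Set.range xs)) {c : H}
    (h : ∀ y : H, ∀ γ : ℝ → H, IsGeodesic γ → γ 0 = c → γ 1 = y →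
      ∀ p : ℕ → H, (∀ n, IsProjPt (γ '' Set.Icc (0 : ℝ) 1) (xs n) (p n)) →
        Tendsto (fun n => dist c (p n)) atTop (𝓝 0)) :
    WeakConvSeq xs c := by
  intro φ hφ y
  obtain ⟨γ, hγ, h0, h1⟩ := hH.geodesic c y
  have hy : y ∈ γ '' Set.Icc (0 : ℝ) 1 := ⟨1, by norm_num, h1⟩
  choose p hp using fun n => hγ.isCompact_image.exists_isProjPt ⟨y, hy⟩ (xs n)
  obtain ⟨M, hM⟩ := hxs.exists_dist_le y
  have he := (tendsto_mul_add_const (h y γ hγ h0 h1 p hp) (2 * M)).comp hφ.tendsto_atTop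
  refine le_of_forall_pos_le_add fun δ hδ => ?_
  refine limsup_dist_sq_le_add (hxs.subset (Set.range_comp_subset_range _ _)) ?_
  filter_upwards [he.eventually_lt_const hδ] with n hn
  have hpy := (hp (φ n)).2 y hy
  have htri := dist_triangle c (p (φ n)) (xs (φ n))
  rw [dist_comm (p _)] at htri
  rw [dist_comm _ y] at hpy
  have hsq := sq_le_sq_add_of_le_add (a := dist c (xs (φ n))) dist_nonneg dist_nonneg (hM (φ n))
    (by linarith : _ ≤ _ + dist c (p (φ n)))
  simp only [Function.comp_apply] at hn ⊢
  linarith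

/-- Characterization of weak convergence of a bounded sequence `xs` to `c` in
a Hadamard space: `(1)` weak convergence is equivalent to `(2)` convergence to `c` of the
projections onto (the image of) any geodesic through `c`, and to `(3)` convergence to `c` of
the projections onto any geodesic segment `[c,y]`. -/
theorem weak_convergence_iff_projections
    {H : Type*} [MetricSpace H] [CompleteSpace H] (hH : HadamardSpace H)
    (xs : ℕ → H) (hxs : Bornology.IsBounded (Set.range xs)) (c : H) :
    (WeakConvSeq xs c ↔
      (∀ γ : ℝ → H, IsGeodesic γ → (∃ t ∈ Set.Icc (0:ℝ) 1, γ t = c) →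
        ∀ p : ℕ → H, (∀ n, IsProjPt (γ '' Set.Icc (0:ℝ) 1) (xs n) (p n)) →
          Tendsto (fun n => dist c (p n)) atTop (𝓝 0))) ∧
    (WeakConvSeq xs c ↔
      (∀ y : H, ∀ γ : ℝ → H, IsGeodesic γ → γ 0 = c → γ 1 = y →
        ∀ p : ℕ → H, (∀ n, IsProjPt (γ '' Set.Icc (0:ℝ) 1) (xs n) (p n)) →
          Tendsto (fun n => dist c (p n)) atTop (𝓝 0))) := by
  have forward : WeakConvSeq xs c → ∀ γ : ℝ → H, IsGeodesic γ →
      (∃ t ∈ Set.Icc (0 : ℝ) 1, γ t = c) → ∀ p : ℕ → H,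
      (∀ n, IsProjPt (γ '' Set.Icc (0 : ℝ) 1) (xs n) (p n)) →
        Tendsto (fun n => dist c (p n)) atTop (𝓝 0) :=
    fun hw _ hγ hc _ hp => hw.tendsto_dist_isProjPt hH hxs hγ hc hp
  have start_mem : ∀ γ : ℝ → H, γ 0 = c → ∃ t ∈ Set.Icc (0 : ℝ) 1, γ t = c :=
    fun _ h0 => ⟨0, by norm_num, h0⟩
  exact ⟨⟨forward, fun h => weakConvSeq_of_tendsto_dist_isProjPt hH hxs
      fun _ γ hγ h0 _ => h γ hγ (start_mem γ h0)⟩,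
    ⟨fun hw _ γ hγ h0 _ => forward hw γ hγ (start_mem γ h0),
      weakConvSeq_of_tendsto_dist_isProjPt hH hxs⟩⟩
end

section
/- Every Hadamard space (H,d) has the Opial property: if a bounded sequence (x_n) ⊂ H weakly converges to x ∈ H, then liminf_{n→∞} d(x_n,x) < liminf_{n→∞} d(x_n,z) for every z ∈ H with z ≠ x. -/
open Filter Topology
open scoped Classical

/-- Along a suitable subsequence, the distances of a bounded sequence to `c` converge, and the
distances to `z` converge to a limit not exceeding `liminf d(x_n, z)`. -/
lemma exists_subseq_tendsto_dist {H : Type*} [MetricSpace H] {x : ℕ → H}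
    (hx : Bornology.IsBounded (Set.range x)) (c z : H) :
    ∃ φ : ℕ → ℕ, StrictMono φ ∧ ∃ M L : ℝ,
      Tendsto (fun n => dist (x (φ n)) c) atTop (𝓝 M) ∧
      Tendsto (fun n => dist (x (φ n)) z) atTop (𝓝 L) ∧
      L ≤ liminf (fun n => dist (x n) z) atTop := by
  have bdd (y : H) : ∃ R, ∀ n, dist (x n) y ≤ R := by
    obtain ⟨R, hR⟩ := hx.subset_closedBall y
    exact ⟨R, fun n => hR ⟨n, rfl⟩⟩
  obtain ⟨A, hA⟩ := bdd c
  obtain ⟨B, hB⟩ := bdd z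
  set L₀ := liminf (fun n => dist (x n) z) atTop
  have hfreq : ∀ k : ℕ, ∃ᶠ n in atTop, dist (x n) z < L₀ + 1 / ((k : ℝ) + 1) := fun k =>
    frequently_lt_of_liminf_lt
      (isBoundedUnder_of ⟨B, hB⟩ : IsBoundedUnder (· ≤ ·) atTop _).isCoboundedUnder_ge
      (lt_add_of_pos_right L₀ Nat.one_div_pos_of_nat)
  obtain ⟨ψ, hψ, hψL⟩ := extraction_forall_of_frequently hfreq
  have hmem : ∀ n, (dist (x (ψ n)) c, dist (x (ψ n)) z) ∈ Set.Icc (0 : ℝ) A ×ˢ Set.Icc (0 : ℝ) B :=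
    fun n => ⟨⟨dist_nonneg, hA _⟩, ⟨dist_nonneg, hB _⟩⟩
  obtain ⟨⟨M, L⟩, -, θ, hθ, hlim⟩ := (isCompact_Icc.prod isCompact_Icc).tendsto_subseq hmem
  have hlimL : Tendsto (fun n => dist (x (ψ (θ n))) z) atTop (𝓝 L) :=
    (continuous_snd.tendsto _).comp hlim
  refine ⟨ψ ∘ θ, hψ.comp hθ, M, L, (continuous_fst.tendsto _).comp hlim, hlimL, ?_⟩
  have hupper : Tendsto (fun n => L₀ + 1 / ((θ n : ℝ) + 1)) atTop (𝓝 (L₀ + 0)) :=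
    (tendsto_one_div_add_atTop_nhds_zero_nat.comp hθ.tendsto_atTop).const_add L₀
  rw [add_zero] at hupper
  exact le_of_tendsto_of_tendsto' hlimL hupper fun n => (hψL (θ n)).le

/-- An asymptotic center `c` is strictly closer, in the limit, than any other point `z`. -/
lemma IsAsymptoticCenter.lt_of_tendsto {H : Type*} [MetricSpace H] [CompleteSpace H]
    (hH : HadamardSpace H) {y : ℕ → H} {c z : H} (hc : IsAsymptoticCenter y c) (hz : z ≠ c)
    {M L : ℝ} (hM : Tendsto (fun n => dist (y n) c) atTop (𝓝 M))
    (hL : Tendsto (fun n => dist (y n) z) atTop (𝓝 L)) : M < L := by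
  obtain ⟨γ, hγ, h0, h1⟩ := hH.geodesic c z
  have hmid (n : ℕ) : dist (γ (1 / 2)) (y n) ^ 2 ≤
      (1 - 1 / 2) * dist (y n) c ^ 2 + 1 / 2 * dist (y n) z ^ 2
        - 1 / 2 * (1 - 1 / 2) * dist c z ^ 2 := by
    have h := hH.cat0 (y n) γ hγ (1 / 2) ⟨by norm_num, by norm_num⟩
    rwa [h0, h1, dist_comm (y n) (γ _)] at h
  have hbound := (((hM.pow 2).const_mul (1 - 1 / 2)).add ((hL.pow 2).const_mul (1 / 2))).sub_const
    (1 / 2 * (1 - 1 / 2) * dist c z ^ 2)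
  have hMsq : limsup (fun n => dist c (y n) ^ 2) atTop = M ^ 2 := by
    simp_rw [dist_comm c]
    exact (hM.pow 2).limsup_eq
  have hle : M ^ 2 ≤ (1 - 1 / 2) * M ^ 2 + 1 / 2 * L ^ 2 - 1 / 2 * (1 - 1 / 2) * dist c z ^ 2 := by
    rw [← hbound.limsup_eq, ← hMsq]
    refine (hc (γ (1 / 2))).trans (limsup_le_limsup (Eventually.of_forall hmid) ?_
      hbound.isBoundedUnder_le)
    exact (isBoundedUnder_of ⟨0, fun n => sq_nonneg _⟩ :
      IsBoundedUnder (· ≥ ·) atTop _).isCoboundedUnder_le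
  have hd : 0 < dist c z ^ 2 := pow_pos (dist_pos.2 hz.symm) 2
  have hL0 : 0 ≤ L := ge_of_tendsto' hL fun _ => dist_nonneg
  exact lt_of_pow_lt_pow_left₀ 2 hL0 (by linarith)

/-- Every Hadamard space has the Opial property: if a bounded sequence
weakly converges to `x`, then `liminf d(x_n,x) < liminf d(x_n,z)` for every `z ≠ x`. -/
theorem hadamard_opial_property
    {H : Type*} [MetricSpace H] [CompleteSpace H] (hH : HadamardSpace H)
    (x : ℕ → H) (hx : Bornology.IsBounded (Set.range x)) (c : H)
    (hconv : WeakConvSeq x c) (z : H) (hz : z ≠ c) :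
    liminf (fun n => dist (x n) c) atTop < liminf (fun n => dist (x n) z) atTop := by
  obtain ⟨φ, hφ, M, L, hM, hL, hLle⟩ := exists_subseq_tendsto_dist hx c z
  refine lt_of_le_of_lt ?_ (((hconv φ hφ).lt_of_tendsto hH hz hM hL).trans_le hLle)
  obtain ⟨R, hR⟩ := hx.subset_closedBall c
  have hbdd : IsCoboundedUnder (· ≥ ·) (map φ atTop) fun n => dist (x n) c :=
    (isBoundedUnder_of ⟨R, fun n => hR ⟨n, rfl⟩⟩ :
      IsBoundedUnder (· ≤ ·) (map φ atTop) _).isCoboundedUnder_ge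
  have hlim : Tendsto (fun n => dist (x n) c) (map φ atTop) (𝓝 M) := tendsto_map'_iff.2 hM
  rw [← hlim.liminf_eq]
  exact liminf_le_liminf_of_le hφ.tendsto_atTop
    (isBoundedUnder_of ⟨0, fun _ => dist_nonneg⟩) hbdd
end

section
/- Let (H,d) be a Hadamard space, (x_n) ⊂ H a bounded sequence, and x ∈ H. Then x_n → x (strongly, in the metric) if and only if (x_n) weakly converges to x and there exists some y ∈ H with d(x_n,y) → d(x,y). -/
open Filter Topology
open scoped Classical

/-- If `c` is an asymptotic center of `x`, the distances `d(x_n, c)` converge to `L` and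
`d(x_n, y) → d(c, y)` for some `y`, then `L = 0`. -/
theorem IsAsymptoticCenter.eq_zero_of_tendsto_dist {H : Type*} [MetricSpace H] [CompleteSpace H]
    (hH : HadamardSpace H) {x : ℕ → H} {c y : H} {L : ℝ} (hc : IsAsymptoticCenter x c)
    (hL : Tendsto (fun n => dist (x n) c) atTop (𝓝 L))
    (hy : Tendsto (fun n => dist (x n) y) atTop (𝓝 (dist c y))) : L = 0 := by
  obtain ⟨γ, hγ, rfl, rfl⟩ := hH.geodesic c y
  have key : ∀ t ∈ Set.Ioc (0 : ℝ) 1, L ^ 2 ≤ t * dist (γ 0) (γ 1) ^ 2 := by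
    intro t ht
    have hlim : Tendsto (fun n => (1 - t) * dist (x n) (γ 0) ^ 2 + t * dist (x n) (γ 1) ^ 2
        - t * (1 - t) * dist (γ 0) (γ 1) ^ 2) atTop
        (𝓝 ((1 - t) * L ^ 2 + t * dist (γ 0) (γ 1) ^ 2
          - t * (1 - t) * dist (γ 0) (γ 1) ^ 2)) :=
      (((hL.pow 2).const_mul _).add ((hy.pow 2).const_mul _)).sub_const _
    have hcenter : limsup (fun n => dist (γ 0) (x n) ^ 2) atTop = L ^ 2 := by
      simp_rw [dist_comm (γ 0)]
      exact (hL.pow 2).limsup_eq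
    have hle : limsup (fun n => dist (γ t) (x n) ^ 2) atTop ≤ _ :=
      (limsup_le_limsup (.of_forall fun n => by
        rw [dist_comm]
        exact hH.cat0 (x n) γ hγ t (Set.Ioc_subset_Icc_self ht))
        (isCoboundedUnder_le_of_le atTop (x := 0) fun n => sq_nonneg _)
        hlim.isBoundedUnder_le).trans_eq hlim.limsup_eq
    have h := hcenter ▸ (hc (γ t)).trans hle
    refine le_of_mul_le_mul_left ?_ ht.1
    linarith
  have hlim : Tendsto (fun t : ℝ => t * dist (γ 0) (γ 1) ^ 2) (𝓝[>] 0) (𝓝 0) :=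
    ((continuous_id.mul continuous_const).tendsto' _ _ (by simp)).mono_left nhdsWithin_le_nhds
  have h : L ^ 2 ≤ 0 := ge_of_tendsto hlim <| by
    filter_upwards [Ioc_mem_nhdsGT (zero_lt_one' ℝ)] using key
  exact pow_eq_zero_iff two_ne_zero |>.1 (h.antisymm (sq_nonneg L))

/-- A convergent sequence converges weakly to its limit. -/
theorem Filter.Tendsto.weakConvSeq {H : Type*} [MetricSpace H] {x : ℕ → H} {c : H}
    (h : Tendsto x atTop (𝓝 c)) : WeakConvSeq x c := by
  intro φ hφ y
  have hlim (z : H) : limsup (fun n => dist z ((x ∘ φ) n) ^ 2) atTop = dist z c ^ 2 :=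
    ((tendsto_const_nhds.dist (h.comp hφ.tendsto_atTop)).pow 2).limsup_eq
  rw [hlim, hlim, dist_self]
  exact pow_le_pow_left₀ le_rfl dist_nonneg 2

/-- A bounded sequence converging weakly to `c`, with `d(x_n, y) → d(c, y)` for some `y`,
converges to `c`. -/
theorem WeakConvSeq.tendsto {H : Type*} [MetricSpace H] [CompleteSpace H]
    (hH : HadamardSpace H) {x : ℕ → H} (hx : Bornology.IsBounded (Set.range x)) {c y : H}
    (hw : WeakConvSeq x c) (hy : Tendsto (fun n => dist (x n) y) atTop (𝓝 (dist c y))) :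
    Tendsto x atTop (𝓝 c) := by
  obtain ⟨R, hR⟩ := hx.subset_closedBall c
  refine tendsto_of_subseq_tendsto fun ns hns => ?_
  obtain ⟨φ, -, hφ⟩ := strictMono_subseq_of_tendsto_atTop hns
  obtain ⟨L, -, ψ, hψ, hL⟩ := (isCompact_Icc (a := 0) (b := R)).tendsto_subseq
    (x := fun n => dist (x (ns (φ n))) c) fun n => ⟨dist_nonneg, hR ⟨_, rfl⟩⟩
  have hmono := hφ.comp hψ
  have hL0 : L = 0 :=
    (hw _ hmono).eq_zero_of_tendsto_dist hH hL (hy.comp hmono.tendsto_atTop)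
  exact ⟨φ ∘ ψ, tendsto_iff_dist_tendsto_zero.2 (hL0 ▸ hL)⟩

/-- In a Hadamard space, a bounded sequence converges strongly to `x` iff it
converges weakly to `x` and `d(x_n,y) → d(x,y)` for some `y`. -/
theorem strong_conv_iff_weak_conv_and_dist_conv
    {H : Type*} [MetricSpace H] [CompleteSpace H] (hH : HadamardSpace H)
    (x : ℕ → H) (hx : Bornology.IsBounded (Set.range x)) (c : H) :
    Tendsto x atTop (𝓝 c) ↔
      (WeakConvSeq x c ∧ ∃ y : H, Tendsto (fun n => dist (x n) y) atTop (𝓝 (dist c y))) := by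
  refine ⟨fun h => ⟨h.weakConvSeq, c, h.dist tendsto_const_nhds⟩, ?_⟩
  rintro ⟨hw, y, hy⟩
  exact hw.tendsto hH hx hy
end
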